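/- arXiv:2204.11069 — 8 statements merged into one kernel-verified Lean document; each statement's English description precedes it below -/
import Mathlib

section
/- Let h : ℝ → ℝ be nondecreasing and square-integrable with respect to the standard Gaussian measure N(0,1). Then for every ξ ∈ ℝ and every u ∈ (0,1], the integral ∫_ℝ ( ∫_0^{ξ+ζ} |h(x)| dx ) p(u,ζ) dζ is finite, where p(u,ζ) = (2πu)^{-1/2} exp(−ζ²/(2u)) is the density of N(0,u). -/
open MeasureTheory ProbabilityTheory

/-- The density of the centered Gaussian distribution `N(0,u)`. -/
noncomputable def gaussDensity (u ζ : ℝ) : ℝ :=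
  (Real.sqrt (2 * Real.pi * u))⁻¹ * Real.exp (-ζ ^ 2 / (2 * u))

lemma aux_dens (f : ℝ → ℝ) (hf : Integrable f (gaussianReal 0 1)) :
    Integrable (fun x => gaussianPDFReal 0 1 x * f x) := by
  rw [gaussianReal_of_var_ne_zero 0 (one_ne_zero)] at hf
  rw [integrable_withDensity_iff_integrable_smul' (measurable_gaussianPDF 0 1)
    (Filter.Eventually.of_forall fun x => gaussianPDF_lt_top)] at hf
  simpa [toReal_gaussianPDF] using hf

lemma aux_local (f : ℝ → ℝ) (hf0 : ∀ x, 0 ≤ f x)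
    (hf : Integrable (fun x => gaussianPDFReal 0 1 x * f x)) (a c R : ℝ) (hc0 : 0 ≤ c)
    (hc : ∀ y ∈ Set.Ioc a (a+1), c ≤ f y) (hR : ∀ y ∈ Set.Ioc a (a+1), |y| ≤ R) :
    c ≤ (∫ x, gaussianPDFReal 0 1 x * f x) * Real.sqrt (2 * Real.pi) * Real.exp (R ^ 2 / 2) := by
  have h1 : ∫ _x in Set.Ioc a (a+1), ((Real.sqrt (2 * Real.pi))⁻¹ * Real.exp (-(R ^ 2 / 2))) * c
      ≤ ∫ x in Set.Ioc a (a+1), gaussianPDFReal 0 1 x * f x := by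
    apply setIntegral_mono_on (integrableOn_const (by simp)) hf.integrableOn measurableSet_Ioc
    intro y hy
    have hy2 : y ^ 2 ≤ R ^ 2 := by
      rw [← sq_abs y]
      exact pow_le_pow_left₀ (abs_nonneg _) (hR y hy) 2
    apply mul_le_mul _ (hc y hy) hc0 (gaussianPDFReal_nonneg _ _ _)
    simp only [gaussianPDFReal, NNReal.coe_one, mul_one, sub_zero]
    gcongr
    linarith
  have h2 : ∫ x in Set.Ioc a (a+1), gaussianPDFReal 0 1 x * f x
      ≤ ∫ x, gaussianPDFReal 0 1 x * f x :=
    setIntegral_le_integral hf (Filter.Eventually.of_forall fun x =>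
      mul_nonneg (gaussianPDFReal_nonneg _ _ _) (hf0 x))
  have h3 := h1.trans h2
  rw [setIntegral_const] at h3
  simp only [Real.volume_real_Ioc, add_sub_cancel_left, smul_eq_mul] at h3
  norm_num at h3
  have hs : 0 < Real.sqrt (2 * Real.pi) := by positivity
  rw [Real.sqrt_mul (by norm_num)] at hs ⊢
  have hE := Real.exp_pos (R^2/2)
  rw [Real.exp_neg] at h3
  have h4 := mul_le_mul_of_nonneg_right h3 (mul_pos hs hE).le
  calc c = _ := ?_
    _ ≤ _ := h4
    _ = _ := by ring
  have : Real.sqrt 2 ≠ 0 := by positivity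
  have : Real.sqrt Real.pi ≠ 0 := by positivity
  field_simp

lemma aux_bound (h : ℝ → ℝ) (hmono : Monotone h)
    (hL2 : Integrable (fun x => (h x) ^ 2) (gaussianReal 0 1)) :
    ∃ A : ℝ, 0 ≤ A ∧ ∀ x, |h x| ≤ A * Real.exp ((|x| + 1) ^ 2 / 4) := by
  have hf := aux_dens _ hL2
  set D := (∫ x, gaussianPDFReal 0 1 x * h x ^ 2) * Real.sqrt (2 * Real.pi) with hD
  have hD0 : 0 ≤ D := mul_nonneg (integral_nonneg fun x =>
    mul_nonneg (gaussianPDFReal_nonneg _ _ _) (sq_nonneg _)) (Real.sqrt_nonneg _)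
  have key : ∀ x, |h x| ≤ |h 0| ∨ h x ^ 2 ≤ D * Real.exp ((|x| + 1) ^ 2 / 2) := by
    intro x
    rcases le_total 0 x with hx | hx
    · rcases le_total (h x) 0 with hh | hh
      · left
        have := hmono hx
        rw [abs_of_nonpos hh, abs_of_nonpos (this.trans hh)]
        linarith
      · right
        refine aux_local (fun x => h x ^ 2) (fun x => sq_nonneg _) hf x _ _ (sq_nonneg _) ?_ ?_
        · intro y hy
          exact pow_le_pow_left₀ hh (hmono hy.1.le) 2
        · intro y hy
          rw [abs_of_nonneg hx, abs_of_nonneg (hx.trans hy.1.le)]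
          exact hy.2
    · rcases le_total 0 (h x) with hh | hh
      · left
        have := hmono hx
        rw [abs_of_nonneg hh, abs_of_nonneg (hh.trans this)]
        linarith
      · right
        refine aux_local (fun x => h x ^ 2) (fun x => sq_nonneg _) hf (x-1) _ _ (sq_nonneg _) ?_ ?_
        · intro y hy
          have := hmono (show y ≤ x by linarith [hy.2])
          show h x ^ 2 ≤ h y ^ 2
          nlinarith
        · intro y hy
          have := hy.1
          have := hy.2
          rw [abs_of_nonpos hx, abs_of_nonpos (by linarith)]
          linarith
  refine ⟨|h 0| + Real.sqrt D, by positivity, fun x => ?_⟩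
  have hE : 1 ≤ Real.exp ((|x| + 1) ^ 2 / 4) := Real.one_le_exp (by positivity)
  have hs := Real.sqrt_nonneg D
  have h0 := abs_nonneg (h 0)
  rcases key x with hk | hk
  · nlinarith
  · have : |h x| ≤ Real.sqrt D * Real.exp ((|x| + 1) ^ 2 / 4) := by
      refine abs_le_of_sq_le_sq ?_ (by positivity)
      rw [mul_pow, Real.sq_sqrt hD0, ← Real.exp_nat_mul]
      have e : ((2 : ℕ) : ℝ) * ((|x| + 1) ^ 2 / 4) = (|x| + 1) ^ 2 / 2 := by
        push_cast
        ring
      rw [e]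
      exact hk
    nlinarith

/-- for a nondecreasing `h` that is square-integrable with respect to the
standard Gaussian measure, for every `ξ` and `u ∈ (0,1]`, the function
`ζ ↦ (∫_0^{ξ+ζ} |h(x)| dx) · p(u,ζ)` is (Lebesgue-)integrable on `ℝ`. -/
theorem stmt0 (h : ℝ → ℝ) (hmono : Monotone h)
    (hL2 : Integrable (fun x => (h x) ^ 2) (gaussianReal 0 1))
    (ξ : ℝ) (u : ℝ) (hu : u ∈ Set.Ioc (0 : ℝ) 1) :
    Integrable (fun ζ : ℝ => (∫ x in (0:ℝ)..(ξ + ζ), |h x|) * gaussDensity u ζ) := by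
  obtain ⟨A, hA, hb⟩ := aux_bound h hmono hL2
  obtain ⟨hu0, hu1⟩ := hu
  set K := |ξ| + 1 with hK
  set M := K ^ 2 / 4 + K + 2 * (K / 2 + 1) ^ 2 with hM
  have hg : Integrable (fun ζ : ℝ =>
      (A * (Real.sqrt (2 * Real.pi * u))⁻¹ * Real.exp M) * Real.exp (-(1/8) * ζ ^ 2)) :=
    (integrable_exp_neg_mul_sq (by norm_num)).const_mul _
  refine hg.mono' ?_ (Filter.Eventually.of_forall fun ζ => ?_)
  · apply Continuous.aestronglyMeasurable
    apply Continuous.mul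
    · exact (intervalIntegral.continuous_primitive
        (fun a b => (hmono.intervalIntegrable (a := a) (b := b)).abs) 0).comp
        (continuous_const.add continuous_id)
    · unfold gaussDensity
      fun_prop
  · have h1 : ‖∫ x in (0:ℝ)..(ξ + ζ), |h x|‖ ≤
        A * Real.exp ((|ξ + ζ| + 1) ^ 2 / 4) * |ξ + ζ - 0| := by
      apply intervalIntegral.norm_integral_le_of_norm_le_const
      intro x hx
      rw [Real.norm_eq_abs, abs_abs]
      have hx' : |x| ≤ |ξ + ζ| := by
        rcases Set.mem_uIoc.mp hx with ⟨p, q⟩ | ⟨p, q⟩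
        · exact abs_le_abs_of_nonneg p.le q
        · exact abs_le_abs_of_nonpos q p.le
      refine (hb x).trans ?_
      gcongr
    have hy : |ξ + ζ| + 1 ≤ |ζ| + K := by
      have := abs_add_le ξ ζ
      linarith
    have h2 : |ξ + ζ - 0| ≤ Real.exp (|ζ| + K) := by
      rw [sub_zero]
      have := Real.add_one_le_exp (|ζ| + K)
      linarith
    have h3 : Real.exp (-ζ ^ 2 / (2 * u)) ≤ Real.exp (-ζ ^ 2 / 2) := by
      apply Real.exp_le_exp.mpr
      rw [neg_div, neg_div, neg_le_neg_iff]
      apply div_le_div_of_nonneg_left (sq_nonneg _) (by linarith) (by linarith)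
    have h4 : Real.exp ((|ζ| + K) ^ 2 / 4) * Real.exp (|ζ| + K) * Real.exp (-ζ ^ 2 / 2)
        ≤ Real.exp M * Real.exp (-(1/8) * ζ ^ 2) := by
      rw [← Real.exp_add, ← Real.exp_add, ← Real.exp_add]
      apply Real.exp_le_exp.mpr
      rw [hM, ← sq_abs ζ]
      nlinarith [sq_nonneg (|ζ| - 4 * (K / 2 + 1))]
    rw [norm_mul, Real.norm_of_nonneg (show 0 ≤ gaussDensity u ζ by
      unfold gaussDensity; positivity)]
    unfold gaussDensity
    calc _ ≤ (A * Real.exp ((|ζ| + K) ^ 2 / 4) * Real.exp (|ζ| + K)) *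
          ((Real.sqrt (2 * Real.pi * u))⁻¹ * Real.exp (-ζ ^ 2 / 2)) := by
          refine mul_le_mul (h1.trans ?_) ?_ (by positivity) (by positivity)
          · gcongr
          · gcongr
      _ = (A * (Real.sqrt (2 * Real.pi * u))⁻¹) * (Real.exp ((|ζ| + K) ^ 2 / 4) *
          Real.exp (|ζ| + K) * Real.exp (-ζ ^ 2 / 2)) := by ring
      _ ≤ (A * (Real.sqrt (2 * Real.pi * u))⁻¹) *
          (Real.exp M * Real.exp (-(1/8) * ζ ^ 2)) := by gcongr
      _ = _ := by ring
end

section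
/- Let h : ℝ → ℝ be nondecreasing and square-integrable with respect to N(0,1), and define R(u,ξ) = ∫_ℝ ( ∫_0^{ξ+ζ} h(x) dx ) p(u,ζ) dζ for u ∈ (0,1] and R(0,ξ) = ∫_0^ξ h(x) dx. Then R is continuous on [0,1] × ℝ, is of class C^{1,2} on (0,1] × ℝ, and on (0,1) × ℝ it solves the heat equation ∂_u R(u,ξ) = (1/2) ∂²_{ξξ} R(u,ξ), with initial condition R(0,ξ) = ∫_0^ξ h(x) dx. -/
open MeasureTheory ProbabilityTheory

/-- The function `R(u,ξ) = ∫ (∫_0^{ξ+ζ} h) p(u,ζ) dζ` for `u > 0`,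
with `R(0,ξ) = ∫_0^ξ h`. -/
noncomputable def heatR (h : ℝ → ℝ) (u ξ : ℝ) : ℝ :=
  if u = 0 then ∫ x in (0:ℝ)..ξ, h x
  else ∫ ζ : ℝ, (∫ x in (0:ℝ)..(ξ + ζ), h x) * gaussDensity u ζ

open Set Filter Topology

lemma aux_int (h : ℝ → ℝ) (hL2 : Integrable (fun x => (h x) ^ 2) (gaussianReal 0 1)) :
    Integrable (fun x => (h x) ^ 2 * Real.exp (-x ^ 2 / 2)) := by
  rw [gaussianReal_of_var_ne_zero 0 one_ne_zero,
    integrable_withDensity_iff (measurable_gaussianPDF 0 1)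
      (ae_of_all _ fun x => gaussianPDF_lt_top)] at hL2
  have := hL2.mul_const (Real.sqrt (2 * Real.pi))
  refine this.congr (ae_of_all _ fun x => ?_)
  simp only [toReal_gaussianPDF, gaussianPDFReal]
  have : Real.sqrt (2 * Real.pi) ≠ 0 := by positivity
  simp
  field_simp

lemma aux_sq (h : ℝ → ℝ) (hmono : Monotone h)
    (hi : Integrable (fun x => (h x) ^ 2 * Real.exp (-x ^ 2 / 2))) (x : ℝ) :
    (h x) ^ 2 * Real.exp (-(|x| + 1) ^ 2 / 2) ≤ ∫ x, (h x) ^ 2 * Real.exp (-x ^ 2 / 2) := by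
  have key : ∀ a : ℝ, (∀ y ∈ Icc a (a + 1), (h x) ^ 2 ≤ (h y) ^ 2 ∧ |y| ≤ |x| + 1) →
      (h x) ^ 2 * Real.exp (-(|x| + 1) ^ 2 / 2) ≤ ∫ x, (h x) ^ 2 * Real.exp (-x ^ 2 / 2) := by
    intro a ha
    calc (h x) ^ 2 * Real.exp (-(|x| + 1) ^ 2 / 2)
        = ∫ y in Icc a (a + 1), (h x) ^ 2 * Real.exp (-(|x| + 1) ^ 2 / 2) := by simp
      _ ≤ ∫ y in Icc a (a + 1), (h y) ^ 2 * Real.exp (-y ^ 2 / 2) := by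
        refine setIntegral_mono_on (integrableOn_const (by simp)) hi.integrableOn measurableSet_Icc ?_
        intro y hy
        obtain ⟨h1, h2⟩ := ha y hy
        have : y ^ 2 ≤ (|x| + 1) ^ 2 := sq_le_sq.2 (by rwa [abs_of_nonneg (by positivity : 0 ≤ |x| + 1)])
        gcongr
      _ ≤ _ := setIntegral_le_integral hi (ae_of_all _ fun y => by positivity)
  rcases le_total 0 (h x) with h0 | h0
  · refine key x fun y hy => ⟨?_, ?_⟩
    · have := hmono hy.1
      gcongr
    · have h1 := neg_abs_le x
      have h2 := le_abs_self x
      exact abs_le.2 ⟨by linarith [hy.1], by linarith [hy.2]⟩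
  · refine key (x - 1) fun y hy => ⟨?_, ?_⟩
    · have : h y ≤ h x := hmono (by linarith [hy.2])
      nlinarith
    · have h1 := neg_abs_le x
      have h2 := le_abs_self x
      exact abs_le.2 ⟨by linarith [hy.1], by linarith [hy.2]⟩

lemma aux_growth (h : ℝ → ℝ) (hmono : Monotone h)
    (hL2 : Integrable (fun x => (h x) ^ 2) (gaussianReal 0 1)) :
    ∃ C : ℝ, 0 ≤ C ∧ ∀ x, |∫ t in (0:ℝ)..x, h t| ≤ C * Real.exp (3 / 10 * x ^ 2) := by
  have hi := aux_int h hL2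
  set I := ∫ x, (h x) ^ 2 * Real.exp (-x ^ 2 / 2) with hI
  have hI0 : 0 ≤ I := integral_nonneg fun y => by positivity
  have hb : ∀ x, |h x| ≤ Real.sqrt I * Real.exp (11 / 40 * x ^ 2 + 11 / 4) := by
    intro x
    have h1 := aux_sq h hmono hi x
    rw [← hI] at h1
    refine abs_le_of_sq_le_sq ?_ (by positivity)
    rw [mul_pow, Real.sq_sqrt hI0, ← Real.exp_nat_mul]
    have h2 : (h x) ^ 2 = (h x) ^ 2 * Real.exp (-(|x| + 1) ^ 2 / 2) * Real.exp ((|x| + 1) ^ 2 / 2) := by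
      rw [mul_assoc, ← Real.exp_add]; ring_nf; simp
    rw [h2]
    gcongr
    push_cast
    nlinarith [sq_nonneg (|x| - 10), sq_abs x]
  refine ⟨Real.sqrt I * Real.exp 13, by positivity, fun x => ?_⟩
  have h1 : ‖∫ t in (0:ℝ)..x, h t‖ ≤ (Real.sqrt I * Real.exp (11 / 40 * x ^ 2 + 11 / 4)) * |x - 0| := by
    refine intervalIntegral.norm_integral_le_of_norm_le_const fun t ht => ?_
    refine (hb t).trans ?_
    have : t ^ 2 ≤ x ^ 2 := by
      rcases le_total 0 x with h0 | h0
      · rw [uIoc_of_le h0] at ht; nlinarith [ht.1, ht.2]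
      · rw [uIoc_of_ge h0] at ht; nlinarith [ht.1, ht.2]
    gcongr
  rw [Real.norm_eq_abs, sub_zero] at h1
  refine h1.trans ?_
  have h3 : |x| ≤ Real.exp (x ^ 2 / 40 + 10) := by
    have := Real.add_one_le_exp (x ^ 2 / 40 + 10)
    nlinarith [sq_nonneg (|x| - 20), sq_abs x]
  calc _ ≤ (Real.sqrt I * Real.exp (11 / 40 * x ^ 2 + 11 / 4)) * Real.exp (x ^ 2 / 40 + 10) := by gcongr
    _ = Real.sqrt I * Real.exp (12 / 40 * x ^ 2 + 51 / 4) := by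
      rw [mul_assoc, ← Real.exp_add]; ring_nf
    _ ≤ Real.sqrt I * Real.exp (13 + 3 / 10 * x ^ 2) := by
      gcongr ?_ * Real.exp ?_; linarith
    _ = _ := by rw [Real.exp_add]; ring

lemma aux_cont (h : ℝ → ℝ) (hmono : Monotone h) :
    Continuous fun x => ∫ t in (0:ℝ)..x, h t :=
  intervalIntegral.continuous_primitive (fun _ _ => hmono.intervalIntegrable) 0

/-- Kernels with locally uniform Gaussian decay. -/
structure GoodKernel (G : ℝ → ℝ → ℝ) : Prop where
  cont : ContinuousOn (fun q : ℝ × ℝ => G q.1 q.2) (Ioi 0 ×ˢ univ)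
  bdd : ∀ δ > 0, ∃ C : ℝ, 0 ≤ C ∧ ∀ u ∈ Icc δ (10 / 9 : ℝ), ∀ x, |G u x| ≤ C * Real.exp (-(2 / 5) * x ^ 2)

lemma GoodKernel.dom {G : ℝ → ℝ → ℝ} (hG : GoodKernel G) {H : ℝ → ℝ} {C : ℝ}
    (hC : ∀ x, |H x| ≤ C * Real.exp (3 / 10 * x ^ 2)) (δ : ℝ) (hδ : 0 < δ) (M : ℝ) :
    ∃ D : ℝ, ∀ u ∈ Icc δ (10 / 9 : ℝ), ∀ ξ : ℝ, |ξ| ≤ M → ∀ y,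
      ‖H y * G u (y - ξ)‖ ≤ D * Real.exp (-(1 / 20) * y ^ 2) := by
  obtain ⟨B, hB0, hB⟩ := hG.bdd δ hδ
  have hC0 : 0 ≤ C := by have := (abs_nonneg _).trans (hC 0); simpa using this
  refine ⟨C * B * Real.exp (14 / 5 * M ^ 2), fun u hu ξ hξ y => ?_⟩
  rw [norm_mul, Real.norm_eq_abs, Real.norm_eq_abs]
  calc |H y| * |G u (y - ξ)| ≤ (C * Real.exp (3 / 10 * y ^ 2)) * (B * Real.exp (-(2 / 5) * (y - ξ) ^ 2)) := by
        gcongr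
        · exact hC y
        · exact hB u hu _
    _ = C * B * Real.exp (3 / 10 * y ^ 2 + -(2 / 5) * (y - ξ) ^ 2) := by rw [Real.exp_add]; ring
    _ ≤ C * B * Real.exp (14 / 5 * M ^ 2 + -(1 / 20) * y ^ 2) := by
        gcongr ?_ * Real.exp ?_
        have : ξ ^ 2 ≤ M ^ 2 := sq_le_sq' (by linarith [neg_abs_le ξ]) ((le_abs_self ξ).trans hξ)
        nlinarith [sq_nonneg (y - 8 * ξ)]
    _ = _ := by rw [Real.exp_add]; ring

lemma aux_bint (D : ℝ) : Integrable fun y : ℝ => D * Real.exp (-(1 / 20) * y ^ 2) :=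
  (integrable_exp_neg_mul_sq (by norm_num)).const_mul D

lemma GoodKernel.cont_y {G : ℝ → ℝ → ℝ} (hG : GoodKernel G) {H : ℝ → ℝ} (hH : Continuous H)
    {u : ℝ} (hu : 0 < u) (ξ : ℝ) : Continuous fun y => H y * G u (y - ξ) := by
  refine hH.mul ?_
  have : Continuous fun y : ℝ => ((u, y - ξ) : ℝ × ℝ) := by fun_prop
  exact hG.cont.comp_continuous this (fun y => ⟨hu, trivial⟩)

lemma GoodKernel.nhds {u : ℝ} (hu : u ∈ Ioo (0:ℝ) (10 / 9)) (ξ : ℝ) :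
    Icc (u / 2) (10 / 9) ×ˢ {x : ℝ | |x| ≤ |ξ| + 1} ∈ 𝓝 (u, ξ) := by
  refine prod_mem_nhds (Icc_mem_nhds (by linarith [hu.1]) hu.2) ?_
  have : {x : ℝ | |x| < |ξ| + 1} ∈ 𝓝 ξ :=
    (isOpen_lt continuous_abs continuous_const).mem_nhds (by simp)
  exact mem_of_superset this fun x (hx : |x| < |ξ| + 1) => hx.le

lemma GoodKernel.continuousAt {G : ℝ → ℝ → ℝ} (hG : GoodKernel G) {H : ℝ → ℝ} {C : ℝ}
    (hC : ∀ x, |H x| ≤ C * Real.exp (3 / 10 * x ^ 2)) (hH : Continuous H)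
    {u : ℝ} (hu : u ∈ Ioo (0:ℝ) (10 / 9)) (ξ : ℝ) :
    ContinuousAt (fun q : ℝ × ℝ => ∫ y, H y * G q.1 (y - q.2)) (u, ξ) := by
  have hu2 : 0 < u / 2 := by linarith [hu.1]
  obtain ⟨D, hD⟩ := hG.dom hC (u / 2) hu2 (|ξ| + 1)
  have hn := GoodKernel.nhds hu ξ
  refine continuousAt_of_dominated (bound := fun y => D * Real.exp (-(1 / 20) * y ^ 2)) ?_ ?_ (aux_bint D) ?_
  · filter_upwards [hn] with q hq
    exact (hG.cont_y hH (by linarith [hq.1.1]) q.2).aestronglyMeasurable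
  · filter_upwards [hn] with q hq
    exact ae_of_all _ fun y => hD q.1 hq.1 q.2 hq.2 y
  · refine ae_of_all _ fun y => continuousAt_const.mul ?_
    have h1 : ContinuousAt (fun q : ℝ × ℝ => G q.1 q.2) (u, y - ξ) :=
      hG.cont.continuousAt (prod_mem_nhds (Ioi_mem_nhds hu.1) univ_mem)
    have h2 : ContinuousAt (fun q : ℝ × ℝ => ((q.1, y - q.2) : ℝ × ℝ)) (u, ξ) := by fun_prop
    exact ContinuousAt.comp (f := fun q : ℝ × ℝ => ((q.1, y - q.2) : ℝ × ℝ)) h1 h2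

lemma GoodKernel.deriv_x {G G' : ℝ → ℝ → ℝ} (hG : GoodKernel G) (hG' : GoodKernel G')
    (hd : ∀ u > 0, ∀ x, HasDerivAt (fun x => G u x) (G' u x) x) {H : ℝ → ℝ} {C : ℝ}
    (hC : ∀ x, |H x| ≤ C * Real.exp (3 / 10 * x ^ 2)) (hH : Continuous H)
    {u : ℝ} (hu : u ∈ Ioo (0:ℝ) (10 / 9)) (ξ : ℝ) :
    HasDerivAt (fun x => ∫ y, H y * G u (y - x)) (-∫ y, H y * G' u (y - ξ)) ξ := by
  have hu2 : 0 < u / 2 := by linarith [hu.1]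
  have hum : u ∈ Icc (u / 2) (10 / 9) := ⟨by linarith, hu.2.le⟩
  obtain ⟨D, hD⟩ := hG.dom hC (u / 2) hu2 (|ξ| + 1)
  obtain ⟨D', hD'⟩ := hG'.dom hC (u / 2) hu2 (|ξ| + 1)
  have hs : {x : ℝ | |x| ≤ |ξ| + 1} ∈ 𝓝 ξ :=
    mem_of_superset ((isOpen_lt continuous_abs continuous_const).mem_nhds
      (by simp : |ξ| < |ξ| + 1)) fun x (hx : |x| < |ξ| + 1) => hx.le
  rw [← integral_neg]
  refine (hasDerivAt_integral_of_dominated_loc_of_deriv_le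
    (F' := fun x y => -(H y * G' u (y - x)))
    (bound := fun y => D' * Real.exp (-(1 / 20) * y ^ 2)) hs ?_ ?_ ?_ ?_ (aux_bint D') ?_).2
  · exact Eventually.of_forall fun x => (hG.cont_y hH hu.1 x).aestronglyMeasurable
  · exact (aux_bint D).mono' (hG.cont_y hH hu.1 ξ).aestronglyMeasurable
      (ae_of_all _ fun y => hD u hum ξ (by simp) y)
  · exact (hG'.cont_y hH hu.1 ξ).neg.aestronglyMeasurable
  · refine ae_of_all _ fun y x hx => ?_
    rw [norm_neg]
    exact hD' u hum x hx y
  · refine ae_of_all _ fun y x hx => ?_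
    have h1 := (hd u hu.1 (y - x)).comp x ((hasDerivAt_id x).const_sub y)
    have h2 := h1.const_mul (H y)
    simpa [Function.comp_def] using h2

lemma GoodKernel.deriv_u {G G' : ℝ → ℝ → ℝ} (hG : GoodKernel G) (hG' : GoodKernel G')
    (hd : ∀ u > 0, ∀ x, HasDerivAt (fun u => G u x) (G' u x) u) {H : ℝ → ℝ} {C : ℝ}
    (hC : ∀ x, |H x| ≤ C * Real.exp (3 / 10 * x ^ 2)) (hH : Continuous H)
    {u : ℝ} (hu : u ∈ Ioo (0:ℝ) (10 / 9)) (ξ : ℝ) :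
    HasDerivAt (fun v => ∫ y, H y * G v (y - ξ)) (∫ y, H y * G' u (y - ξ)) u := by
  have hu2 : 0 < u / 2 := by linarith [hu.1]
  have hum : u ∈ Icc (u / 2) (10 / 9) := ⟨by linarith, hu.2.le⟩
  obtain ⟨D, hD⟩ := hG.dom hC (u / 2) hu2 (|ξ| + 1)
  obtain ⟨D', hD'⟩ := hG'.dom hC (u / 2) hu2 (|ξ| + 1)
  have hs : Icc (u / 2) (10 / 9) ∈ 𝓝 u := Icc_mem_nhds (by linarith) hu.2
  refine (hasDerivAt_integral_of_dominated_loc_of_deriv_le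
    (F' := fun v y => H y * G' v (y - ξ))
    (bound := fun y => D' * Real.exp (-(1 / 20) * y ^ 2)) hs ?_ ?_ ?_ ?_ (aux_bint D') ?_).2
  · filter_upwards [hs] with v hv
    exact (hG.cont_y hH (hu2.trans_le hv.1) ξ).aestronglyMeasurable
  · exact (aux_bint D).mono' (hG.cont_y hH hu.1 ξ).aestronglyMeasurable
      (ae_of_all _ fun y => hD u hum ξ (by simp) y)
  · exact (hG'.cont_y hH hu.1 ξ).aestronglyMeasurable
  · exact ae_of_all _ fun y v hv => hD' v hv ξ (by simp) y
  · exact ae_of_all _ fun y v hv => (hd v (hu2.trans_le hv.1) (y - ξ)).const_mul (H y)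

/-- First space derivative of the Gaussian density. -/
noncomputable def gaussD1 (u x : ℝ) : ℝ := -(x / u) * gaussDensity u x

/-- Second space derivative of the Gaussian density. -/
noncomputable def gaussD2 (u x : ℝ) : ℝ := (x ^ 2 / u ^ 2 - 1 / u) * gaussDensity u x

/-- Time derivative of the Gaussian density. -/
noncomputable def gaussDu (u x : ℝ) : ℝ := (1 / 2) * gaussD2 u x

lemma gauss_cont : ContinuousOn (fun q : ℝ × ℝ => gaussDensity q.1 q.2) (Ioi 0 ×ˢ univ) := by
  intro q hq
  have hq0 : (0:ℝ) < q.1 := hq.1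
  have h1 : Real.sqrt (2 * Real.pi * q.1) ≠ 0 := by positivity
  have h2 : 2 * q.1 ≠ 0 := by positivity
  unfold gaussDensity
  exact ContinuousAt.continuousWithinAt (by fun_prop (disch := assumption))

lemma gauss_bound (δ : ℝ) (hδ : 0 < δ) (u : ℝ) (hu : u ∈ Icc δ (10 / 9 : ℝ)) (x : ℝ) :
    0 ≤ gaussDensity u x ∧
    gaussDensity u x ≤ (Real.sqrt (2 * Real.pi * δ))⁻¹ * Real.exp (-(9 / 20) * x ^ 2) := by
  have hu0 : 0 < u := hδ.trans_le hu.1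
  unfold gaussDensity
  refine ⟨by positivity, ?_⟩
  have h1 := hu.1
  have h2 : -x ^ 2 / (2 * u) ≤ -(9 / 20) * x ^ 2 := by
    rw [div_le_iff₀ (by positivity)]
    nlinarith [hu.2, sq_nonneg x, mul_nonneg (sq_nonneg x) (sub_nonneg.2 hu.2)]
  gcongr

lemma good_of_poly {P : ℝ → ℝ → ℝ} (hP : ContinuousOn (fun q : ℝ × ℝ => P q.1 q.2) (Ioi 0 ×ˢ univ))
    (hb : ∀ δ > 0, ∃ B : ℝ, 0 ≤ B ∧ ∀ u ∈ Icc δ (10 / 9 : ℝ), ∀ x, |P u x| ≤ B * (1 + x ^ 2 / 20)) :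
    GoodKernel fun u x => P u x * gaussDensity u x := by
  refine ⟨hP.mul gauss_cont, fun δ hδ => ?_⟩
  obtain ⟨B, hB0, hB⟩ := hb δ hδ
  refine ⟨B * (Real.sqrt (2 * Real.pi * δ))⁻¹, by positivity, fun u hu x => ?_⟩
  obtain ⟨h0, h1⟩ := gauss_bound δ hδ u hu x
  rw [abs_mul, abs_of_nonneg h0]
  have h2 : 1 + x ^ 2 / 20 ≤ Real.exp (x ^ 2 / 20) := by linarith [Real.add_one_le_exp (x ^ 2 / 20)]
  calc _ ≤ (B * Real.exp (x ^ 2 / 20)) * ((Real.sqrt (2 * Real.pi * δ))⁻¹ * Real.exp (-(9 / 20) * x ^ 2)) := by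
        refine mul_le_mul ((hB u hu x).trans (by gcongr)) h1 h0 (by positivity)
    _ = B * (Real.sqrt (2 * Real.pi * δ))⁻¹ * Real.exp (x ^ 2 / 20 + -(9 / 20) * x ^ 2) := by
        rw [Real.exp_add]; ring
    _ = _ := by ring_nf

lemma good0 : GoodKernel gaussDensity := by
  have := good_of_poly (P := fun _ _ => 1) continuousOn_const
    (fun δ hδ => ⟨1, by norm_num, fun u hu x => by simp; positivity⟩)
  simpa using this

lemma good1 : GoodKernel gaussD1 := by
  refine good_of_poly (P := fun u x => -(x / u)) ?_ ?_
  · intro q hq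
    have hq0 : q.1 ≠ 0 := ne_of_gt hq.1
    exact ContinuousAt.continuousWithinAt (by fun_prop (disch := assumption))
  · intro δ hδ
    refine ⟨20 / δ, by positivity, fun u hu x => ?_⟩
    have hu0 : 0 < u := hδ.trans_le hu.1
    rw [abs_neg, abs_div, abs_of_pos hu0]
    calc |x| / u ≤ |x| / δ := by have := hu.1; gcongr
      _ ≤ (20 + x ^ 2) / δ := by
        gcongr
        nlinarith [sq_nonneg (|x| - 1), sq_abs x]
      _ = _ := by ring

lemma good2 : GoodKernel gaussD2 := by
  refine good_of_poly (P := fun u x => x ^ 2 / u ^ 2 - 1 / u) ?_ ?_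
  · intro q hq
    have hq0 : q.1 ≠ 0 := ne_of_gt hq.1
    have hq1 : q.1 ^ 2 ≠ 0 := pow_ne_zero 2 hq0
    exact ContinuousAt.continuousWithinAt (by fun_prop (disch := assumption))
  · intro δ hδ
    refine ⟨20 / δ ^ 2 + 1 / δ, by positivity, fun u hu x => ?_⟩
    have hu0 : 0 < u := hδ.trans_le hu.1
    have h1 : x ^ 2 / u ^ 2 ≤ x ^ 2 / δ ^ 2 := by have := hu.1; gcongr
    have h2 : 1 / u ≤ 1 / δ := by have := hu.1; gcongr
    calc |x ^ 2 / u ^ 2 - 1 / u| ≤ |x ^ 2 / u ^ 2| + |1 / u| := abs_sub _ _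
      _ = x ^ 2 / u ^ 2 + 1 / u := by
        rw [abs_of_nonneg (by positivity), abs_of_nonneg (by positivity)]
      _ ≤ x ^ 2 / δ ^ 2 + 1 / δ := by gcongr
      _ ≤ x ^ 2 / δ ^ 2 + 1 / δ + (20 / δ ^ 2 + 1 / δ * (x ^ 2 / 20)) := by
        have : 0 ≤ (20 / δ ^ 2 + 1 / δ * (x ^ 2 / 20)) := by positivity
        linarith
      _ = _ := by ring

lemma goodu : GoodKernel gaussDu := by
  refine ⟨continuousOn_const.mul good2.cont, fun δ hδ => ?_⟩
  obtain ⟨C, hC0, hC⟩ := good2.bdd δ hδ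
  refine ⟨1 / 2 * C, by positivity, fun u hu x => ?_⟩
  rw [gaussDu, abs_mul, abs_of_nonneg (by norm_num : (0:ℝ) ≤ 1 / 2), mul_assoc]
  exact mul_le_mul_of_nonneg_left (hC u hu x) (by norm_num)

lemma gauss_d1 (u : ℝ) (hu : 0 < u) (x : ℝ) :
    HasDerivAt (fun x => gaussDensity u x) (gaussD1 u x) x := by
  have h1 : HasDerivAt (fun x : ℝ => -x ^ 2 / (2 * u)) (-(x / u)) x := by
    have := ((hasDerivAt_pow 2 x).neg).div_const (2 * u)
    refine HasDerivAt.congr_deriv (f' := _) this ?_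
    push_cast
    field_simp
  have h2 := h1.exp.const_mul (Real.sqrt (2 * Real.pi * u))⁻¹
  refine HasDerivAt.congr_deriv (f' := _) h2 ?_
  simp only [gaussD1, gaussDensity]
  ring

lemma gauss_d2 (u : ℝ) (hu : 0 < u) (x : ℝ) :
    HasDerivAt (fun x => gaussD1 u x) (gaussD2 u x) x := by
  have h1 : HasDerivAt (fun x : ℝ => -(x / u)) (-(1 / u)) x :=
    ((hasDerivAt_id x).div_const u).neg
  have h2 := h1.mul (gauss_d1 u hu x)
  refine HasDerivAt.congr_deriv (f' := _) h2 ?_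
  simp only [gaussD1, gaussD2]
  field_simp
  ring

lemma gauss_du (u : ℝ) (hu : 0 < u) (x : ℝ) :
    HasDerivAt (fun u => gaussDensity u x) (gaussDu u x) u := by
  have hp := Real.pi_pos
  have hs : Real.sqrt (2 * Real.pi * u) ≠ 0 := by positivity
  have h1 : HasDerivAt (fun u : ℝ => -x ^ 2 / (2 * u)) (x ^ 2 / (2 * u ^ 2)) u := by
    have := (hasDerivAt_const u (-x ^ 2)).div ((hasDerivAt_id u).const_mul 2) (by simpa using hu.ne')
    refine HasDerivAt.congr_deriv (f' := _) this ?_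
    simp only [id, mul_one, zero_mul, zero_sub]
    field_simp
  have h3 : HasDerivAt (fun u : ℝ => Real.sqrt (2 * Real.pi * u))
      (2 * Real.pi / (2 * Real.sqrt (2 * Real.pi * u))) u := by
    have := ((hasDerivAt_id u).const_mul (2 * Real.pi)).sqrt (by simp; exact hu.ne')
    simpa using this
  have h2 := (h3.inv hs).mul h1.exp
  refine HasDerivAt.congr_deriv (f' := _) h2 ?_
  simp only [gaussDu, gaussD2, gaussDensity, Pi.inv_apply]
  have hsq : Real.sqrt (2 * Real.pi * u) ^ 2 = 2 * Real.pi * u := Real.sq_sqrt (by positivity)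
  generalize Real.exp (-x ^ 2 / (2 * u)) = E
  rw [hsq]
  field_simp
  ring

lemma heatR_conv (h : ℝ → ℝ) {u : ℝ} (hu : 0 < u) (ξ : ℝ) :
    heatR h u ξ = ∫ y, (∫ t in (0:ℝ)..y, h t) * gaussDensity u (y - ξ) := by
  rw [heatR, if_neg hu.ne', ← integral_sub_right_eq_self _ ξ]
  simp

lemma heatR_scale (h : ℝ → ℝ) {u : ℝ} (hu : 0 ≤ u) (ξ : ℝ) :
    heatR h u ξ = ∫ z, (∫ t in (0:ℝ)..(ξ + Real.sqrt u * z), h t) * gaussDensity 1 z := by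
  rcases hu.eq_or_lt with rfl | hu
  · have h1 : ∫ z, gaussDensity 1 z = 1 := by
      have := integral_gaussianPDFReal_eq_one 0 (one_ne_zero : (1 : NNReal) ≠ 0)
      simpa [gaussianPDFReal, gaussDensity] using this
    simp [heatR, integral_const_mul, h1]
  · rw [heatR, if_neg hu.ne']
    have hs : 0 < Real.sqrt u := Real.sqrt_pos.2 hu
    have h1 := Measure.integral_comp_mul_left
      (fun ζ => (∫ t in (0:ℝ)..(ξ + ζ), h t) * gaussDensity u ζ) (Real.sqrt u)
    rw [abs_of_pos (inv_pos.2 hs), smul_eq_mul, eq_comm, inv_mul_eq_iff_eq_mul₀ hs.ne'] at h1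
    rw [h1, ← integral_const_mul]
    refine integral_congr_ae (ae_of_all _ fun z => ?_)
    simp only
    have h2 : Real.sqrt u * gaussDensity u (Real.sqrt u * z) = gaussDensity 1 z := by
      unfold gaussDensity
      rw [mul_pow, Real.sq_sqrt hu.le, Real.sqrt_mul (by positivity) u, mul_one, mul_one, mul_inv]
      have : -(u * z ^ 2) / (2 * u) = -z ^ 2 / 2 := by field_simp
      rw [this]
      field_simp
    rw [← h2]; ring

lemma heatR_cont (h : ℝ → ℝ) (hmono : Monotone h)
    (hL2 : Integrable (fun x => (h x) ^ 2) (gaussianReal 0 1)) :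
    ContinuousOn (fun q : ℝ × ℝ => heatR h q.1 q.2) (Set.Icc 0 1 ×ˢ Set.univ) := by
  obtain ⟨C, hC0, hC⟩ := aux_growth h hmono hL2
  have hH := aux_cont h hmono
  set H : ℝ → ℝ := fun x => ∫ t in (0:ℝ)..x, h t with hHdef
  have hC : ∀ x, |H x| ≤ C * Real.exp (3 / 10 * x ^ 2) := hC
  suffices hm : ContinuousOn (fun q : ℝ × ℝ => ∫ z, H (q.2 + Real.sqrt q.1 * z) * gaussDensity 1 z)
      (Set.Icc 0 1 ×ˢ Set.univ) from hm.congr fun q hq => heatR_scale h hq.1.1 q.2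
  have hg : Continuous fun z => gaussDensity 1 z := by unfold gaussDensity; fun_prop
  rintro ⟨u, ξ⟩ hq
  set A := (Real.sqrt (2 * Real.pi * 1))⁻¹ with hA
  have hs : {q : ℝ × ℝ | |q.2| < |ξ| + 1} ∈ 𝓝 (u, ξ) :=
    (isOpen_lt (by fun_prop) continuous_const).mem_nhds (by simp)
  refine continuousWithinAt_of_dominated
    (bound := fun z => C * Real.exp (9 / 10 * (|ξ| + 1) ^ 2) * A * Real.exp (-(1 / 20) * z ^ 2))
    ?_ ?_ (aux_bint _) ?_
  · refine Eventually.of_forall fun q => Continuous.aestronglyMeasurable ?_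
    exact (hH.comp (by fun_prop)).mul hg
  · filter_upwards [mem_nhdsWithin_of_mem_nhds hs, self_mem_nhdsWithin] with q hq1 hq2
    refine ae_of_all _ fun z => ?_
    have hq1 : |q.2| < |ξ| + 1 := hq1
    have hp : 0 ≤ gaussDensity 1 z := by unfold gaussDensity; positivity
    rw [norm_mul, Real.norm_eq_abs, Real.norm_eq_abs, abs_of_nonneg hp]
    calc _ ≤ (C * Real.exp (3 / 10 * (q.2 + Real.sqrt q.1 * z) ^ 2)) * gaussDensity 1 z := by
          gcongr; exact hC _
      _ ≤ (C * Real.exp (9 / 10 * (|ξ| + 1) ^ 2 + 9 / 20 * z ^ 2)) * gaussDensity 1 z := by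
          have e1 : (q.2) ^ 2 ≤ (|ξ| + 1) ^ 2 :=
            sq_le_sq' (by linarith [neg_abs_le q.2]) ((le_abs_self q.2).trans hq1.le)
          have e2 : (Real.sqrt q.1 * z) ^ 2 ≤ z ^ 2 := by
            rw [mul_pow, Real.sq_sqrt hq2.1.1]
            nlinarith [hq2.1.2, mul_nonneg (sub_nonneg.2 hq2.1.2) (sq_nonneg z)]
          gcongr
          nlinarith [sq_nonneg (2 * q.2 - Real.sqrt q.1 * z)]
      _ = C * Real.exp (9 / 10 * (|ξ| + 1) ^ 2) * A * (Real.exp (9 / 20 * z ^ 2) * Real.exp (-z ^ 2 / (2 * 1))) := by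
          rw [Real.exp_add, gaussDensity]; ring
      _ = _ := by rw [← Real.exp_add]; ring_nf
  · refine ae_of_all _ fun z => Continuous.continuousWithinAt ?_
    exact (hH.comp (by fun_prop)).mul continuous_const

/-- `R` is continuous on `[0,1] × ℝ`, of class `C^{1,2}` on `(0,1] × ℝ`
(in the sense that `∂_u R`, `∂_ξ R` and `∂²_{ξξ} R` exist there and are continuous),
solves the heat equation `∂_u R = ½ ∂²_{ξξ} R` on `(0,1) × ℝ`, and has initial
condition `R(0,ξ) = ∫_0^ξ h`. -/
theorem stmt1 (h : ℝ → ℝ) (hmono : Monotone h)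
    (hL2 : Integrable (fun x => (h x) ^ 2) (gaussianReal 0 1)) :
    ContinuousOn (fun q : ℝ × ℝ => heatR h q.1 q.2) (Set.Icc 0 1 ×ˢ Set.univ) ∧
    (∃ Ru Rx Rxx : ℝ → ℝ → ℝ,
      (∀ u ∈ Set.Ioc (0:ℝ) 1, ∀ ξ : ℝ,
        HasDerivAt (fun v => heatR h v ξ) (Ru u ξ) u ∧
        HasDerivAt (fun x => heatR h u x) (Rx u ξ) ξ ∧
        HasDerivAt (fun x => Rx u x) (Rxx u ξ) ξ) ∧
      ContinuousOn (fun q : ℝ × ℝ => Ru q.1 q.2) (Set.Ioc 0 1 ×ˢ Set.univ) ∧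
      ContinuousOn (fun q : ℝ × ℝ => Rx q.1 q.2) (Set.Ioc 0 1 ×ˢ Set.univ) ∧
      ContinuousOn (fun q : ℝ × ℝ => Rxx q.1 q.2) (Set.Ioc 0 1 ×ˢ Set.univ) ∧
      (∀ u ∈ Set.Ioo (0:ℝ) 1, ∀ ξ : ℝ, Ru u ξ = (1/2) * Rxx u ξ)) ∧
    (∀ ξ : ℝ, heatR h 0 ξ = ∫ x in (0:ℝ)..ξ, h x) := by
  obtain ⟨C, hC0, hC⟩ := aux_growth h hmono hL2
  have hH := aux_cont h hmono
  have hmem : ∀ u ∈ Ioc (0:ℝ) 1, u ∈ Ioo (0:ℝ) (10 / 9) :=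
    fun u hu => ⟨hu.1, hu.2.trans_lt (by norm_num)⟩
  refine ⟨heatR_cont h hmono hL2,
    ⟨fun u ξ => ∫ y, (∫ t in (0:ℝ)..y, h t) * gaussDu u (y - ξ),
     fun u ξ => -∫ y, (∫ t in (0:ℝ)..y, h t) * gaussD1 u (y - ξ),
     fun u ξ => ∫ y, (∫ t in (0:ℝ)..y, h t) * gaussD2 u (y - ξ), ?_, ?_, ?_, ?_, ?_⟩, ?_⟩
  · intro u hu ξ
    have hu' := hmem u hu
    refine ⟨?_, ?_, ?_⟩
    · refine (good0.deriv_u goodu gauss_du hC hH hu' ξ).congr_of_eventuallyEq ?_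
      filter_upwards [Ioi_mem_nhds hu.1] with v hv
      exact heatR_conv h hv ξ
    · refine (good0.deriv_x good1 gauss_d1 hC hH hu' ξ).congr_of_eventuallyEq ?_
      exact Eventually.of_forall fun x => heatR_conv h hu.1 x
    · have := (good1.deriv_x good2 gauss_d2 hC hH hu' ξ).neg
      rw [neg_neg] at this
      exact this
  · exact fun q hq => (goodu.continuousAt hC hH (hmem _ hq.1) q.2).continuousWithinAt
  · exact fun q hq => (good1.continuousAt hC hH (hmem _ hq.1) q.2).neg.continuousWithinAt
  · exact fun q hq => (good2.continuousAt hC hH (hmem _ hq.1) q.2).continuousWithinAt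
  · intro u hu ξ
    simp only
    rw [← integral_const_mul]
    refine integral_congr_ae (ae_of_all _ fun y => ?_)
    simp only [gaussDu]
    ring
  · intro ξ
    simp [heatR]
end

section
/- Let h : ℝ → ℝ be nondecreasing and square-integrable with respect to N(0,1), and define the convex conjugate at time 0 by R^c(0,v) = sup_{ξ∈ℝ} ( ξ v − ∫_0^ξ h(x) dx ). Then for every x ∈ ℝ one has 0 ≤ R^c(0, h(x)) = | x h(x) − ∫_0^x h(r) dr | ≤ |x| ( |h(x)| + |h(0)| ), and consequently ∫_ℝ R^c(0, h(x)) dN(0,1)(x) < ∞. -/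
open MeasureTheory ProbabilityTheory

/-- The convex conjugate at time `0`: `R^c(0,v) = sup_ξ (ξ v − ∫_0^ξ h)`. -/
noncomputable def Rconj (h : ℝ → ℝ) (v : ℝ) : ℝ :=
  ⨆ ξ : ℝ, (ξ * v - ∫ x in (0:ℝ)..ξ, h x)


theorem stmt4_key (h : ℝ → ℝ) (hmono : Monotone h) (a b : ℝ) :
    (b - a) * h a ≤ ∫ x in a..b, h x := by
  have hi : ∀ a b : ℝ, IntervalIntegrable h volume a b := fun a b => hmono.intervalIntegrable
  rcases le_total a b with hab | hab
  · have := intervalIntegral.integral_mono_on hab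
      (intervalIntegrable_const (c := h a)) (hi a b) (fun x hx => hmono hx.1)
    simpa using this
  · have := intervalIntegral.integral_mono_on hab (hi b a)
      (intervalIntegrable_const (c := h a)) (fun x hx => hmono hx.2)
    rw [intervalIntegral.integral_symm]
    simp only [intervalIntegral.integral_const, smul_eq_mul] at this
    linarith

theorem stmt4_eq (h : ℝ → ℝ) (hmono : Monotone h) (x : ℝ) :
    Rconj h (h x) = x * h x - ∫ r in (0:ℝ)..x, h r := by
  have hi : ∀ a b : ℝ, IntervalIntegrable h volume a b := fun a b => hmono.intervalIntegrable
  have hub : ∀ ξ : ℝ, ξ * h x - ∫ r in (0:ℝ)..ξ, h r ≤ x * h x - ∫ r in (0:ℝ)..x, h r := by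
    intro ξ
    have h1 := stmt4_key h hmono x ξ
    have h2 := intervalIntegral.integral_add_adjacent_intervals (hi 0 x) (hi x ξ)
    linarith
  apply le_antisymm
  · exact ciSup_le hub
  · exact le_ciSup (f := fun ξ : ℝ => ξ * h x - ∫ r in (0:ℝ)..ξ, h r)
      ⟨_, by rintro _ ⟨ξ, rfl⟩; exact hub ξ⟩ x

/-- for every `x`, `0 ≤ R^c(0,h(x)) = |x h(x) − ∫_0^x h| ≤ |x|(|h(x)|+|h(0)|)`,
and `x ↦ R^c(0,h(x))` is integrable with respect to the standard Gaussian measure. -/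
theorem stmt4 (h : ℝ → ℝ) (hmono : Monotone h)
    (hL2 : Integrable (fun x => (h x) ^ 2) (gaussianReal 0 1)) :
    (∀ x : ℝ,
      0 ≤ Rconj h (h x) ∧
      Rconj h (h x) = |x * h x - ∫ r in (0:ℝ)..x, h r| ∧
      Rconj h (h x) ≤ |x| * (|h x| + |h 0|)) ∧
    Integrable (fun x => Rconj h (h x)) (gaussianReal 0 1) := by
  have hi : ∀ a b : ℝ, IntervalIntegrable h volume a b := fun a b => hmono.intervalIntegrable
  have h0 : ∀ x, 0 ≤ Rconj h (h x) := by
    intro x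
    rw [stmt4_eq h hmono]
    have h1 := stmt4_key h hmono x 0
    rw [intervalIntegral.integral_symm] at h1
    linarith
  have hle : ∀ x, Rconj h (h x) ≤ |x| * (|h x| + |h 0|) := by
    intro x
    rw [stmt4_eq h hmono]
    have h1 := stmt4_key h hmono 0 x
    have h2 : x * (h x - h 0) ≤ |x| * |h x - h 0| := by
      rw [← abs_mul]; exact le_abs_self _
    have h3 : |x| * |h x - h 0| ≤ |x| * (|h x| + |h 0|) :=
      mul_le_mul_of_nonneg_left (abs_sub _ _) (abs_nonneg x)
    linarith
  refine ⟨fun x => ⟨h0 x, ?_, hle x⟩, ?_⟩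
  · rw [← stmt4_eq h hmono, abs_of_nonneg (h0 x)]
  · have hx2 : Integrable (fun x : ℝ => x ^ 2) (gaussianReal 0 1) :=
      (memLp_id_gaussianReal (μ := 0) (v := 1) 2).integrable_sq
    have hdom : Integrable (fun x : ℝ => x ^ 2 + (h x) ^ 2 + (h 0) ^ 2) (gaussianReal 0 1) :=
      (hx2.add hL2).add (integrable_const _)
    have hmeas : Measurable (fun x => Rconj h (h x)) := by
      have he : (fun x => Rconj h (h x)) = fun x => x * h x - ∫ r in (0:ℝ)..x, h r :=
        funext (stmt4_eq h hmono)
      rw [he]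
      exact (measurable_id.mul hmono.measurable).sub
        (intervalIntegral.continuous_primitive hi 0).measurable
    refine hdom.mono' hmeas.aestronglyMeasurable (Filter.Eventually.of_forall fun x => ?_)
    rw [Real.norm_eq_abs, abs_of_nonneg (h0 x)]
    refine (hle x).trans ?_
    rw [← sq_abs x, ← sq_abs (h x), ← sq_abs (h 0)]
    nlinarith [sq_nonneg (|x| - |h x|), sq_nonneg (|x| - |h 0|), sq_nonneg (|h x|), sq_nonneg (|h 0|)]
end

section
/- Let h : ℝ → ℝ be nondecreasing and integrable with respect to N(0,1), and set R_ξ(t,x) = ∫_ℝ h(x+ζ) p(t,ζ) dζ for t ∈ (0,1]. Then ∫_0^1 (1−u)^{-1/2} ( ∫_ℝ |R_ξ(1−u, x)| dN(0,u)(x) ) du ≤ 2 ∫_ℝ |h(z)| dN(0,1)(z) < ∞. -/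
open MeasureTheory ProbabilityTheory

/-- `R_ξ(t,x) = ∫ h(x+ζ) p(t,ζ) dζ` for `t ∈ (0,1]`. -/
noncomputable def Rxi (h : ℝ → ℝ) (t x : ℝ) : ℝ :=
  ∫ ζ : ℝ, h (x + ζ) * gaussDensity t ζ

lemma aux_R (h : ℝ → ℝ) (hm : Measurable h) (t : ℝ) (ht : 0 < t) (x : ℝ) :
    ENNReal.ofReal |Rxi h t x| ≤
      ∫⁻ ζ, ENNReal.ofReal |h (x + ζ)| ∂(gaussianReal 0 t.toNNReal) := by
  have hv : t.toNNReal ≠ 0 := by simpa using ht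
  rw [gaussianReal_of_var_ne_zero _ hv,
    lintegral_withDensity_eq_lintegral_mul _ (measurable_gaussianPDF _ _) (by fun_prop)]
  rw [← Real.norm_eq_abs, ofReal_norm]
  refine (enorm_integral_le_lintegral_enorm _).trans (le_of_eq ?_)
  refine lintegral_congr fun ζ => ?_
  have h1 : gaussDensity t ζ = gaussianPDFReal 0 t.toNNReal ζ := by
    simp [gaussDensity, gaussianPDFReal, ht.le]
  rw [h1, enorm_mul, mul_comm, Pi.mul_apply, gaussianPDF, ← Real.norm_eq_abs, ofReal_norm,
    Real.enorm_of_nonneg (gaussianPDFReal_nonneg _ _ _)]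

lemma aux_w : ∫⁻ u in Set.Ioo (0 : ℝ) 1, ENNReal.ofReal ((1 - u) ^ (-(1:ℝ)/2)) = 2 := by
  have hi : IntervalIntegrable (fun u : ℝ => (1 - u) ^ (-(1:ℝ)/2)) volume 0 1 := by
    have := (intervalIntegral.intervalIntegrable_rpow' (a := 1) (b := 0)
      (r := -(1:ℝ)/2) (by norm_num)).comp_sub_left 1
    simpa using this
  have hv : ∫ u in (0:ℝ)..1, (1 - u) ^ (-(1:ℝ)/2) = 2 := by
    rw [intervalIntegral.integral_comp_sub_left (fun u : ℝ => u ^ (-(1:ℝ)/2)) 1,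
      integral_rpow (by left; norm_num)]
    norm_num
  rw [restrict_Ioo_eq_restrict_Ioc, ← ofReal_integral_eq_lintegral_ofReal,
    ← intervalIntegral.integral_of_le zero_le_one, hv]
  · simp
  · exact (intervalIntegrable_iff_integrableOn_Ioc_of_le zero_le_one).1 hi
  · refine (ae_restrict_iff' measurableSet_Ioc).2 (Filter.Eventually.of_forall fun u hu => ?_)
    exact Real.rpow_nonneg (by linarith [hu.2]) _



/-- for nondecreasing `h`, integrable with respect to `N(0,1)`,
`∫_0^1 (1−u)^{-1/2} ( ∫ |R_ξ(1−u,x)| dN(0,u)(x) ) du ≤ 2 ∫ |h| dN(0,1) < ∞`. -/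
theorem stmt6 (h : ℝ → ℝ) (hmono : Monotone h)
    (hL1 : Integrable (fun x => |h x|) (gaussianReal 0 1)) :
    (∫⁻ u in Set.Ioo (0 : ℝ) 1,
        ENNReal.ofReal ((1 - u) ^ (-(1:ℝ)/2)) *
          ∫⁻ x, ENNReal.ofReal |Rxi h (1 - u) x| ∂(gaussianReal 0 u.toNNReal))
      ≤ 2 * ∫⁻ z, ENNReal.ofReal |h z| ∂(gaussianReal 0 1) ∧
    2 * (∫⁻ z, ENNReal.ofReal |h z| ∂(gaussianReal 0 1)) < ⊤ := by
  have hm : Measurable h := hmono.measurable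
  constructor
  · calc
      _ ≤ ∫⁻ u in Set.Ioo (0 : ℝ) 1, ENNReal.ofReal ((1 - u) ^ (-(1:ℝ)/2)) *
          ∫⁻ z, ENNReal.ofReal |h z| ∂(gaussianReal 0 1) := by
        refine setLIntegral_mono' measurableSet_Ioo fun u hu => ?_
        refine mul_le_mul_right ?_ _
        refine (lintegral_mono fun x => aux_R h hm (1 - u) (by linarith [hu.2]) x).trans
          (le_of_eq ?_)
        have hc : gaussianReal 0 1 =
            gaussianReal 0 u.toNNReal ∗ gaussianReal 0 (1 - u).toNNReal := by
          rw [gaussianReal_conv_gaussianReal,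
            ← Real.toNNReal_add hu.1.le (by linarith [hu.2])]
          simp
        rw [hc, Measure.lintegral_conv (by fun_prop)]
      _ = _ := by
        rw [lintegral_mul_const _ (by fun_prop), aux_w]
  · refine ENNReal.mul_lt_top (by simp) ?_
    have := hL1.lintegral_lt_top
    simpa using this
end

section
/- Let X be a stochastic process on [0,1] with continuous sample paths, defined on a probability space, and let γ₀ ∈ (0,1). For M > 0 set F_M = ∫_0^1 ∫_0^1 exp( M |X_t − X_s| / |t−s|^{γ₀} ) dt ds. If E[F_M] < ∞ for every M > 0, then for every γ ∈ [0, γ₀) the pathwise γ-Hölder seminorm |X|_γ = sup_{0 ≤ s < t ≤ 1} |X_t − X_s| / |t−s|^γ satisfies E[ exp( k |X|_γ ) ] < ∞ for every k > 0. -/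
open MeasureTheory

noncomputable def grrF (f : ℝ → ℝ) (g₀ M : ℝ) : ENNReal :=
  ∫⁻ t in Set.Icc (0:ℝ) 1, ∫⁻ s in Set.Icc (0:ℝ) 1,
        ENNReal.ofReal (Real.exp (M * (|f t - f s| / |t - s| ^ g₀)))

lemma grr_one_le (f : ℝ → ℝ) (g₀ M : ℝ) (hM : 0 < M) : 1 ≤ grrF f g₀ M := by
  have h1 : (∫⁻ t in Set.Icc (0:ℝ) 1, ∫⁻ s in Set.Icc (0:ℝ) 1, (1 : ENNReal)) = 1 := by simp
  rw [← h1]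
  refine lintegral_mono fun t => lintegral_mono fun s => ?_
  rw [← ENNReal.ofReal_one]
  apply ENNReal.ofReal_le_ofReal
  exact Real.one_le_exp (by positivity)

lemma grr_jensen (h : ℝ → ℝ) (a b : ℝ) (hab : a < b) (hc : ContinuousOn h (Set.Icc a b)) :
    Real.exp (⨍ x in Set.Icc a b, h x) ≤ (∫ x in Set.Icc a b, Real.exp (h x)) / (b - a) := by
  have := ConvexOn.map_set_average_le (μ := volume) (t := Set.Icc a b) (f := h)
    convexOn_exp Real.continuous_exp.continuousOn isClosed_univ
    (by simp [hab]) (by simp) (by simp) (hc.integrableOn_Icc)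
    ((Real.continuous_exp.comp_continuousOn hc).integrableOn_Icc)
  refine this.trans (le_of_eq ?_)
  rw [setAverage_eq]
  simp [hab.le, div_eq_inv_mul]

lemma grr_step (f : ℝ → ℝ) (hf : ContinuousOn f (Set.Icc 0 1)) (g₀ M : ℝ) (hg : 0 < g₀)
    (hM : 0 < M) (a b c d ρ : ℝ) (hab : a < b) (hcd : c < d) (ha : 0 ≤ a) (hb : b ≤ 1)
    (hc : 0 ≤ c) (hd : d ≤ 1) (hρ : 0 < ρ)
    (hdist : ∀ x ∈ Set.Icc a b, ∀ y ∈ Set.Icc c d, |x - y| ≤ ρ)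
    (hF : grrF f g₀ M ≠ ⊤) :
    M / ρ ^ g₀ * ((⨍ x in Set.Icc a b, f x) - ⨍ x in Set.Icc c d, f x)
      ≤ Real.log ((grrF f g₀ M).toReal / ((b - a) * (d - c))) := by
  have hFpos : 0 < (grrF f g₀ M).toReal :=
    ENNReal.toReal_pos (fun h => by have := grr_one_le f g₀ M hM; simp [h] at this) hF
  have hba : 0 < b - a := by linarith
  have hdc : 0 < d - c := by linarith
  rw [Real.le_log_iff_exp_le (by positivity)]
  set K := M / ρ ^ g₀ with hK
  have hKpos : 0 < K := by positivity
  have hsub1 : Set.Icc a b ⊆ Set.Icc 0 1 := Set.Icc_subset_Icc ha hb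
  have hsub2 : Set.Icc c d ⊆ Set.Icc 0 1 := Set.Icc_subset_Icc hc hd
  have hc1 : ContinuousOn (fun x => K * f x) (Set.Icc a b) :=
    continuousOn_const.mul (hf.mono hsub1)
  have hc2 : ContinuousOn (fun x => -K * f x) (Set.Icc c d) :=
    continuousOn_const.mul (hf.mono hsub2)
  have j1 := grr_jensen _ a b hab hc1
  have j2 := grr_jensen _ c d hcd hc2
  have e1 : (⨍ x in Set.Icc a b, K * f x) = K * ⨍ x in Set.Icc a b, f x := by
    rw [setAverage_eq, setAverage_eq, integral_const_mul]; simp only [smul_eq_mul]; ring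
  have e2 : (⨍ x in Set.Icc c d, -K * f x) = -K * ⨍ x in Set.Icc c d, f x := by
    rw [setAverage_eq, setAverage_eq, integral_const_mul]; simp only [smul_eq_mul]; ring
  rw [e1] at j1
  rw [e2] at j2
  set A := ∫ x in Set.Icc a b, Real.exp (K * f x) with hA
  set B := ∫ x in Set.Icc c d, Real.exp (-K * f x) with hB
  have hA0 : 0 ≤ A := integral_nonneg fun x => (Real.exp_pos _).le
  have hB0 : 0 ≤ B := integral_nonneg fun x => (Real.exp_pos _).le
  have hAB : A * B ≤ (grrF f g₀ M).toReal := by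
    rw [← ENNReal.ofReal_le_iff_le_toReal hF, ENNReal.ofReal_mul hA0]
    have i1 : ENNReal.ofReal A = ∫⁻ x in Set.Icc a b, ENNReal.ofReal (Real.exp (K * f x)) :=
      ofReal_integral_eq_lintegral_ofReal
        ((Real.continuous_exp.comp_continuousOn hc1).integrableOn_Icc)
        (Filter.Eventually.of_forall fun x => (Real.exp_pos _).le)
    have i2 : ENNReal.ofReal B = ∫⁻ x in Set.Icc c d, ENNReal.ofReal (Real.exp (-K * f x)) :=
      ofReal_integral_eq_lintegral_ofReal
        ((Real.continuous_exp.comp_continuousOn hc2).integrableOn_Icc)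
        (Filter.Eventually.of_forall fun x => (Real.exp_pos _).le)
    rw [i1, ← lintegral_mul_const' _ _ ENNReal.ofReal_ne_top]
    refine le_trans ?_ (lintegral_mono_set hsub1)
    refine setLIntegral_mono' measurableSet_Icc fun t ht => ?_
    rw [i2, ← lintegral_const_mul' _ _ ENNReal.ofReal_ne_top]
    refine le_trans ?_ (lintegral_mono_set hsub2)
    refine setLIntegral_mono' measurableSet_Icc fun s hs => ?_
    rw [← ENNReal.ofReal_mul (Real.exp_pos _).le, ← Real.exp_add]
    apply ENNReal.ofReal_le_ofReal
    apply Real.exp_le_exp.2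
    have : K * f t + -K * f s = M * ((f t - f s) / ρ ^ g₀) := by rw [hK]; ring
    rw [this]
    apply mul_le_mul_of_nonneg_left _ hM.le
    rcases eq_or_ne t s with rfl | hne
    · simp
    have hts : 0 < |t - s| := abs_pos.2 (sub_ne_zero.2 hne)
    have : |t - s| ^ g₀ ≤ ρ ^ g₀ := Real.rpow_le_rpow hts.le (hdist t ht s hs) hg.le
    have h3 : 0 < |t - s| ^ g₀ := Real.rpow_pos_of_pos hts _
    calc (f t - f s) / ρ ^ g₀ ≤ |f t - f s| / ρ ^ g₀ := by
          gcongr; exact le_abs_self _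
      _ ≤ _ := by gcongr
  calc Real.exp (K * ((⨍ x in Set.Icc a b, f x) - ⨍ x in Set.Icc c d, f x))
      = Real.exp (K * ⨍ x in Set.Icc a b, f x) * Real.exp (-K * ⨍ x in Set.Icc c d, f x) := by
        rw [← Real.exp_add]; congr 1; ring
    _ ≤ (A / (b - a)) * (B / (d - c)) := by gcongr
    _ = A * B / ((b - a) * (d - c)) := by field_simp
    _ ≤ _ := by gcongr

lemma grr_chain (f : ℝ → ℝ) (hf : ContinuousOn f (Set.Icc 0 1)) (g₀ g M δ : ℝ)
    (hg : 0 ≤ g) (hδ : 0 < δ) (hgg : g₀ = g + 2 * δ)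
    (hM : 0 < M) (hF : grrF f g₀ M ≠ ⊤) (r : ℝ) (hr : 0 < r) (hr1 : r ≤ 1)
    (a b : ℕ → ℝ) (hab : ∀ n, b n - a n = r * (1/2) ^ n)
    (han : ∀ n, a n ≤ a (n+1)) (hbn : ∀ n, b (n+1) ≤ b n) (ha0 : ∀ n, 0 ≤ a n)
    (hb0 : ∀ n, b n ≤ 1) (x : ℝ) (hx : ∀ n, x ∈ Set.Icc (a n) (b n)) :
    |(⨍ y in Set.Icc (a 0) (b 0), f y) - f x| ≤
      (r ^ g * ((Real.log (grrF f g₀ M).toReal + (Real.log 2 + 2 / δ)) / M))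
        / (1 - (1/2) ^ δ) := by
  have hF1 : 1 ≤ (grrF f g₀ M).toReal := by
    have := ENNReal.toReal_mono hF (grr_one_le f g₀ M hM)
    simpa using this
  set F := (grrF f g₀ M).toReal with hFdef
  have hlogF : 0 ≤ Real.log F := Real.log_nonneg hF1
  have hg₀ : 0 < g₀ := by linarith
  have hlt : ∀ n, a n < b n := fun n => by
    have := hab n
    have : 0 < r * (1/2) ^ n := by positivity
    linarith [hab n]
  have key : ∀ n, dist (⨍ y in Set.Icc (a n) (b n), f y)
      (⨍ y in Set.Icc (a (n+1)) (b (n+1)), f y) ≤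
      (r ^ g * ((Real.log F + (Real.log 2 + 2 / δ)) / M)) * ((1/2) ^ δ) ^ n := by
    intro n
    set ρ := r * (1/2) ^ n with hρ
    have hρ0 : 0 < ρ := by positivity
    have hρr : ρ ≤ r := mul_le_of_le_one_right hr.le (pow_le_one₀ (by norm_num) (by norm_num))
    have hρ1 : ρ ≤ 1 := hρr.trans hr1
    have hn1 : b (n+1) - a (n+1) = ρ / 2 := by rw [hab, hρ, pow_succ]; ring
    have s1 := grr_step f hf g₀ M hg₀ hM (a n) (b n) (a (n+1)) (b (n+1)) ρ (hlt _) (hlt _)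
      (ha0 _) (hb0 _) (ha0 _) (hb0 _) hρ0 (fun x hx y hy => by
        rw [abs_le]; constructor <;> linarith [hx.1, hx.2, hy.1, hy.2, han n, hbn n, hab n]) hF
    have s2 := grr_step f hf g₀ M hg₀ hM (a (n+1)) (b (n+1)) (a n) (b n) ρ (hlt _) (hlt _)
      (ha0 _) (hb0 _) (ha0 _) (hb0 _) hρ0 (fun x hx y hy => by
        rw [abs_le]; constructor <;> linarith [hx.1, hx.2, hy.1, hy.2, han n, hbn n, hab n]) hF
    rw [hn1, hab n, ← hρ, ← hFdef] at s1 s2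
    set u := ⨍ y in Set.Icc (a n) (b n), f y
    set v := ⨍ y in Set.Icc (a (n+1)) (b (n+1)), f y
    have hl : Real.log (F / (ρ * (ρ / 2))) = Real.log F + Real.log 2 + 2 * (-Real.log ρ) := by
      rw [Real.log_div (by positivity) (by positivity), Real.log_mul (by positivity) (by positivity),
        Real.log_div (by positivity) (by positivity)]
      ring
    rw [mul_comm (ρ/2) ρ] at s2
    rw [hl] at s1 s2
    set L := Real.log F + Real.log 2 + 2 * (-Real.log ρ) with hL
    have s3 : M / ρ ^ g₀ * |u - v| ≤ L := by
      rcases abs_choice (u - v) with h | h <;> rw [h]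
      · exact s1
      · rw [neg_sub]; exact s2
    have hρg : 0 < ρ ^ g₀ := by positivity
    have s4 : |u - v| ≤ ρ ^ g₀ * L / M := by
      rw [le_div_iff₀ hM]
      rw [div_mul_eq_mul_div, div_le_iff₀ hρg] at s3
      linarith
    have s5 : ρ ^ δ * (-Real.log ρ) ≤ 1 / δ := by
      have h := Real.log_le_rpow_div (x := ρ⁻¹) (by positivity) hδ
      rw [Real.log_inv, Real.inv_rpow hρ0.le] at h
      calc ρ ^ δ * (-Real.log ρ) ≤ ρ ^ δ * ((ρ ^ δ)⁻¹ / δ) := by gcongr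
        _ = 1 / δ := by
          have : ρ ^ δ ≠ 0 := by positivity
          field_simp
    have hρδ1 : ρ ^ δ ≤ 1 := Real.rpow_le_one hρ0.le hρ1 hδ.le
    have hlog2 : 0 ≤ Real.log 2 := Real.log_nonneg (by norm_num)
    have s6 : ρ ^ δ * L ≤ Real.log F + (Real.log 2 + 2 / δ) := by
      have h1 : ρ ^ δ * (Real.log F + Real.log 2) ≤ Real.log F + Real.log 2 :=
        mul_le_of_le_one_left (by positivity) hρδ1
      have h2 : 2 / δ = 2 * (1 / δ) := by ring
      rw [hL, h2]; nlinarith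
    have hρsplit : ρ ^ g₀ = ρ ^ g * ρ ^ δ * ρ ^ δ := by
      rw [hgg, ← Real.rpow_add hρ0, ← Real.rpow_add hρ0]; congr 1; ring
    have hρδ : ρ ^ δ ≤ ((1/2) ^ δ) ^ n := by
      have e : (((1:ℝ)/2) ^ δ) ^ n = ((1/2) ^ n) ^ δ := by
        rw [← Real.rpow_natCast, ← Real.rpow_natCast, ← Real.rpow_mul (by norm_num),
          ← Real.rpow_mul (by norm_num), mul_comm]
      rw [e]
      apply Real.rpow_le_rpow hρ0.le _ hδ.le
      exact mul_le_of_le_one_left (by positivity) hr1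
    have hρg' : ρ ^ g ≤ r ^ g := Real.rpow_le_rpow hρ0.le hρr hg
    have hC : 0 ≤ Real.log F + (Real.log 2 + 2 / δ) := by positivity
    rw [Real.dist_eq]
    calc |u - v| ≤ ρ ^ g₀ * L / M := s4
      _ = ρ ^ g * ((ρ ^ δ * L) / M) * ρ ^ δ := by rw [hρsplit]; ring
      _ ≤ ρ ^ g * ((Real.log F + (Real.log 2 + 2 / δ)) / M) * ρ ^ δ := by gcongr
      _ ≤ _ := by gcongr
  have hx01 : x ∈ Set.Icc (0:ℝ) 1 := ⟨(ha0 0).trans (hx 0).1, (hx 0).2.trans (hb0 0)⟩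
  have hlim : Filter.Tendsto (fun n => ⨍ y in Set.Icc (a n) (b n), f y) Filter.atTop
      (nhds (f x)) := by
    rw [Metric.tendsto_atTop]
    intro ε hε
    obtain ⟨η, hη, hη2⟩ := Metric.continuousOn_iff.1 hf x hx01 (ε/2) (by positivity)
    have ht : Filter.Tendsto (fun n : ℕ => r * (1/2:ℝ) ^ n) Filter.atTop (nhds (r * 0)) :=
      (tendsto_pow_atTop_nhds_zero_of_lt_one (by norm_num) (by norm_num)).const_mul r
    rw [mul_zero] at ht
    obtain ⟨N, hN⟩ := Filter.eventually_atTop.1 (ht.eventually (gt_mem_nhds hη))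
    refine ⟨N, fun n hn => ?_⟩
    have hsub : Set.Icc (a n) (b n) ⊆ Set.Icc 0 1 := Set.Icc_subset_Icc (ha0 n) (hb0 n)
    have hmem : (⨍ y in Set.Icc (a n) (b n), f y) ∈ Metric.closedBall (f x) (ε/2) := by
      apply (convex_closedBall (f x) (ε/2)).set_average_mem Metric.isClosed_closedBall
        (by simp [hlt n]) (by simp)
      · rw [ae_restrict_iff' measurableSet_Icc]
        refine Filter.Eventually.of_forall fun y hy => ?_
        refine Metric.mem_closedBall.2 (hη2 y (hsub hy) ?_).le
        have := hN n hn
        rw [← hab n] at this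
        rw [Real.dist_eq, abs_lt]
        constructor <;> linarith [hy.1, hy.2, (hx n).1, (hx n).2]
      · exact (hf.mono hsub).integrableOn_Icc
    have := Metric.mem_closedBall.1 hmem
    linarith
  have hq : ((1:ℝ)/2) ^ δ < 1 := Real.rpow_lt_one (by norm_num) (by norm_num) hδ
  have := dist_le_of_le_geometric_of_tendsto₀ _ _ hq key hlim
  rwa [Real.dist_eq] at this

lemma grr_main (f : ℝ → ℝ) (hf : ContinuousOn f (Set.Icc 0 1)) (g₀ g M δ k : ℝ)
    (hg : 0 ≤ g) (hδ : 0 < δ) (hgg : g₀ = g + 2 * δ) (hk : 0 < k)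
    (hM : M = 2 * k / (1 - (1/2) ^ δ)) (s t : ℝ) (hs : 0 ≤ s) (hst : s < t) (ht : t ≤ 1) :
    ENNReal.ofReal (Real.exp (k * (|f t - f s| / (t - s) ^ g))) ≤
      ENNReal.ofReal (Real.exp (Real.log 2 + 2 / δ)) * grrF f g₀ M := by
  by_cases hF : grrF f g₀ M = ⊤
  · rw [hF, ENNReal.mul_top]
    · exact le_top
    · simp [Real.exp_pos]
  have hq : ((1:ℝ)/2) ^ δ < 1 := Real.rpow_lt_one (by norm_num) (by norm_num) hδ
  have hq' : 0 < 1 - ((1:ℝ)/2) ^ δ := by linarith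
  have hM0 : 0 < M := by rw [hM]; positivity
  have hr : 0 < t - s := by linarith
  have hp0 : ∀ n : ℕ, 0 < (t - s) * (1/2:ℝ) ^ n := fun n => by positivity
  have hp1 : ∀ n : ℕ, (t - s) * (1/2:ℝ) ^ n ≤ t - s := fun n =>
    mul_le_of_le_one_right hr.le (pow_le_one₀ (by norm_num) (by norm_num))
  have hp2 : ∀ n : ℕ, (t - s) * (1/2:ℝ) ^ (n+1) ≤ (t - s) * (1/2:ℝ) ^ n := fun n => by
    have := hp0 n
    rw [pow_succ]; linarith
  have c1 := grr_chain f hf g₀ g M δ hg hδ hgg hM0 hF (t - s) hr (by linarith)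
    (fun n => t - (t - s) * (1/2) ^ n) (fun _ => t) (fun n => by ring)
    (fun n => by have := hp2 n; linarith) (fun n => le_rfl)
    (fun n => by have := hp1 n; linarith) (fun n => ht) t
    (fun n => ⟨by have := hp0 n; linarith, le_rfl⟩)
  have c2 := grr_chain f hf g₀ g M δ hg hδ hgg hM0 hF (t - s) hr (by linarith)
    (fun _ => s) (fun n => s + (t - s) * (1/2) ^ n) (fun n => by ring)
    (fun n => le_rfl) (fun n => by have := hp2 n; linarith) 
    (fun n => hs) (fun n => by have := hp1 n; linarith) s
    (fun n => ⟨le_rfl, by have := hp0 n; linarith⟩)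
  have e1 : t - (t - s) * (1/2:ℝ) ^ 0 = s := by ring
  have e2 : s + (t - s) * (1/2:ℝ) ^ 0 = t := by ring
  simp only [e1] at c1
  simp only [e2] at c2
  have hFpos : 0 < (grrF f g₀ M).toReal :=
    ENNReal.toReal_pos (fun h => by have := grr_one_le f g₀ M hM0; simp [h] at this) hF
  set F := (grrF f g₀ M).toReal with hFdef
  set m := ⨍ y in Set.Icc s t, f y
  set C := Real.log F + (Real.log 2 + 2 / δ) with hC
  have hrg : 0 < (t - s) ^ g := by positivity
  have h1 : |f t - f s| ≤ 2 * ((t - s) ^ g * (C / M) / (1 - (1/2) ^ δ)) := by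
    have : |f t - f s| ≤ |m - f t| + |m - f s| := by
      have := abs_sub_le (f t) m (f s)
      rwa [abs_sub_comm (f t) m] at this
    linarith
  have h2 : k * (|f t - f s| / (t - s) ^ g) ≤ C := by
    calc k * (|f t - f s| / (t - s) ^ g)
        ≤ k * (2 * ((t - s) ^ g * (C / M) / (1 - (1/2) ^ δ)) / (t - s) ^ g) := by gcongr
      _ = C := by rw [hM]; field_simp
  rw [← ENNReal.ofReal_toReal hF, ← hFdef, ← ENNReal.ofReal_mul (Real.exp_pos _).le]
  apply ENNReal.ofReal_le_ofReal
  calc _ ≤ Real.exp C := Real.exp_le_exp.2 h2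
    _ = _ := by rw [hC, Real.exp_add, Real.exp_log hFpos, mul_comm]

/-- if `X` is a process on `[0,1]` with continuous paths such that
`F_M = ∫_0^1 ∫_0^1 exp(M |X_t − X_s| / |t−s|^{γ₀}) dt ds` has finite expectation for
every `M > 0`, then the pathwise `γ`-Hölder seminorm
`|X|_γ = sup_{0 ≤ s < t ≤ 1} |X_t − X_s|/(t−s)^γ` admits all exponential moments for
every `γ ∈ [0,γ₀)`.  (The exponential moment is expressed in `ℝ≥0∞`, via the
supremum over all pairs `s < t`, so that paths with infinite seminorm contribute `∞`.) -/
theorem stmt8 {Ω : Type*} [MeasurableSpace Ω] (P : Measure Ω) [IsProbabilityMeasure P]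
    (X : Ω → ℝ → ℝ) (hXmeas : Measurable (Function.uncurry X))
    (hXcont : ∀ ω, ContinuousOn (X ω) (Set.Icc 0 1))
    (γ₀ : ℝ) (hγ₀ : γ₀ ∈ Set.Ioo (0:ℝ) 1)
    (hF : ∀ M > (0:ℝ),
      (∫⁻ ω, (∫⁻ t in Set.Icc (0:ℝ) 1, ∫⁻ s in Set.Icc (0:ℝ) 1,
        ENNReal.ofReal (Real.exp (M * (|X ω t - X ω s| / |t - s| ^ γ₀)))) ∂P) < ⊤)
    (γ : ℝ) (hγ : γ ∈ Set.Ico (0:ℝ) γ₀) (k : ℝ) (hk : 0 < k) :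
    (∫⁻ ω, (⨆ (s : ℝ) (t : ℝ) (_ : 0 ≤ s) (_ : s < t) (_ : t ≤ 1),
      ENNReal.ofReal (Real.exp (k * (|X ω t - X ω s| / (t - s) ^ γ)))) ∂P) < ⊤ := by
  have hδ : 0 < (γ₀ - γ) / 2 := by linarith [hγ.2]
  have hq : ((1:ℝ)/2) ^ ((γ₀ - γ) / 2) < 1 := Real.rpow_lt_one (by norm_num) (by norm_num) hδ
  have hq' : 0 < 1 - ((1:ℝ)/2) ^ ((γ₀ - γ) / 2) := by linarith
  have hM0 : 0 < 2 * k / (1 - ((1:ℝ)/2) ^ ((γ₀ - γ) / 2)) := by positivity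
  have hfin := hF _ hM0
  refine lt_of_le_of_lt (lintegral_mono fun ω => ?_) (b := ∫⁻ ω,
    ENNReal.ofReal (Real.exp (Real.log 2 + 2 / ((γ₀ - γ) / 2))) *
      grrF (X ω) γ₀ (2 * k / (1 - ((1:ℝ)/2) ^ ((γ₀ - γ) / 2))) ∂P) ?_
  · refine iSup_le fun s => iSup_le fun t => iSup_le fun hs => iSup_le fun hst =>
      iSup_le fun ht => ?_
    exact grr_main (X ω) (hXcont ω) γ₀ γ _ _ k hγ.1 hδ (by ring) hk rfl s t hs hst ht
  · rw [lintegral_const_mul' _ _ ENNReal.ofReal_ne_top]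
    exact ENNReal.mul_lt_top ENNReal.ofReal_lt_top hfin
end

section
/- Let σ be a stochastic process on [0,1] with continuous nonnegative sample paths. Suppose there exist constants ε > 0 and γ₀ > 0 such that sup_{s ≠ t ∈ [0,1]} E[ exp( ε |σ_t² − σ_s²| / |t−s|^{γ₀} ) ] < ∞. Then for every γ ∈ [0, γ₀/2) the pathwise γ-Hölder seminorm |σ|_γ = sup_{0 ≤ s < t ≤ 1} |σ_t − σ_s| / |t−s|^γ satisfies E[ exp( k |σ|_γ ) ] < ∞ for every k > 0. -/
open MeasureTheory
open scoped ENNReal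

/-- Deterministic chaining along dyadic points. -/
lemma holder_of_dyadic (f : ℝ → ℝ) (hf : ContinuousOn f (Set.Icc 0 1)) (α : ℝ) (hα : 0 < α)
    (B : ℝ)
    (h : ∀ n j : ℕ, j < 2 ^ n →
      |f (((j : ℝ) + 1) / 2 ^ n) - f ((j : ℝ) / 2 ^ n)| ≤ B * ((1 / 2 : ℝ) ^ α) ^ n)
    (s t : ℝ) (hs : 0 ≤ s) (hst : s < t) (ht : t ≤ 1) :
    |f t - f s| ≤ (1 + 2 / (1 - (1 / 2 : ℝ) ^ α)) / (1 / 2 : ℝ) ^ α * B * (t - s) ^ α := by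
  set r : ℝ := (1 / 2 : ℝ) ^ α with hr
  have hr0 : 0 < r := by positivity
  have hr1 : r < 1 := Real.rpow_lt_one (by norm_num) (by norm_num) hα
  have hB : 0 ≤ B := by
    have := (abs_nonneg _).trans (h 0 0 (by norm_num))
    simpa using this
  have key : ∀ x : ℝ, 0 ≤ x → x ≤ 1 → ∀ n : ℕ,
      |f ((⌊2 ^ n * x⌋₊ : ℝ) / 2 ^ n) - f x| ≤ B * r ^ n / (1 - r) := by
    intro x hx0 hx1 n
    have hlim : Filter.Tendsto (fun n : ℕ => (⌊(2:ℝ) ^ n * x⌋₊ : ℝ) / 2 ^ n) Filter.atTop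
        (nhds x) := by
      have h1 := (tendsto_nat_floor_mul_div_atTop (R := ℝ) hx0).comp
        (tendsto_pow_atTop_atTop_of_one_lt (r := (2:ℝ)) (by norm_num))
      refine h1.congr (fun n => ?_)
      simp [mul_comm]
    have hmem : ∀ n : ℕ, (⌊(2:ℝ) ^ n * x⌋₊ : ℝ) / 2 ^ n ∈ Set.Icc (0:ℝ) 1 := by
      intro n
      refine ⟨by positivity, ?_⟩
      rw [div_le_one (by positivity)]
      refine (Nat.floor_le (by positivity)).trans ?_
      have : (0:ℝ) < 2 ^ n := by positivity
      nlinarith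
    have hlim2 : Filter.Tendsto (fun n : ℕ => f ((⌊(2:ℝ) ^ n * x⌋₊ : ℝ) / 2 ^ n)) Filter.atTop
        (nhds (f x)) := by
      have hc : ContinuousWithinAt f (Set.Icc 0 1) x := hf x ⟨hx0, hx1⟩
      exact hc.tendsto.comp (tendsto_nhdsWithin_iff.2 ⟨hlim, Filter.Eventually.of_forall hmem⟩)
    have := dist_le_of_le_geometric_of_tendsto r B hr1 ?_ hlim2 n
    · simpa [Real.dist_eq] using this
    · intro n
      rw [Real.dist_eq, abs_sub_comm]
      set q := ⌊(2:ℝ) ^ n * x⌋₊ with hq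
      set q' := ⌊(2:ℝ) ^ (n+1) * x⌋₊ with hq'
      have e1 : (q:ℝ) ≤ 2 ^ n * x := Nat.floor_le (by positivity)
      have e2 : 2 ^ n * x < (q:ℝ) + 1 := Nat.lt_floor_add_one _
      have e3 : (q':ℝ) ≤ 2 ^ (n+1) * x := Nat.floor_le (by positivity)
      have e4 : 2 ^ (n+1) * x < (q':ℝ) + 1 := Nat.lt_floor_add_one _
      have e5 : (2:ℝ) ^ (n+1) * x = 2 * (2 ^ n * x) := by ring
      have f1 : 2 * q < q' + 1 := by
        have : (2:ℝ) * q < q' + 1 := by linarith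
        exact_mod_cast this
      have f2 : q' < 2 * q + 2 := by
        have : (q':ℝ) < 2 * q + 2 := by linarith
        exact_mod_cast this
      have hpow : B * r ^ (n+1) ≤ B * r ^ n := by
        apply mul_le_mul_of_nonneg_left _ hB
        exact pow_le_pow_of_le_one hr0.le hr1.le (Nat.le_succ n)
      have hqq : (q:ℝ) / 2 ^ n = ((2 * q : ℕ) : ℝ) / 2 ^ (n+1) := by
        push_cast; field_simp; ring
      rcases (by omega : q' = 2 * q ∨ q' = 2 * q + 1) with h' | h'
      · rw [hqq, h', sub_self, abs_zero]; positivity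
      · have hlt : 2 * q < 2 ^ (n+1) := by
          have : (q':ℝ) ≤ 2 ^ (n+1) := by
            refine e3.trans ?_
            have : (0:ℝ) < 2 ^ (n+1) := by positivity
            nlinarith
          have : q' ≤ 2 ^ (n+1) := by exact_mod_cast this
          omega
        have := h (n+1) (2*q) hlt
        rw [hqq, h']
        refine le_trans ?_ (this.trans hpow)
        push_cast
        exact le_rfl
  obtain ⟨n, hn1, hn2⟩ := exists_nat_pow_near_of_lt_one (x := t - s) (y := (1/2:ℝ))
    (by linarith) (by linarith) (by norm_num) (by norm_num)
  have ks := key s hs (by linarith) n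
  have kt := key t (by linarith) ht n
  have hmid : |f ((⌊2 ^ n * t⌋₊ : ℝ) / 2 ^ n) - f ((⌊2 ^ n * s⌋₊ : ℝ) / 2 ^ n)| ≤ B * r ^ n := by
    set q := ⌊(2:ℝ) ^ n * s⌋₊ with hq
    set q' := ⌊(2:ℝ) ^ n * t⌋₊ with hq'
    have hp : (0:ℝ) < 2 ^ n := by positivity
    have e1 : (q:ℝ) ≤ 2 ^ n * s := Nat.floor_le (by positivity)
    have e2 : 2 ^ n * s < (q:ℝ) + 1 := Nat.lt_floor_add_one _
    have e3 : (q':ℝ) ≤ 2 ^ n * t := Nat.floor_le (mul_nonneg hp.le (by linarith))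
    have e4 : 2 ^ n * t < (q':ℝ) + 1 := Nat.lt_floor_add_one _
    have e5 : (2:ℝ) ^ n * (t - s) ≤ 1 := by
      have := mul_le_mul_of_nonneg_left hn2 hp.le
      rwa [← mul_pow, show (2:ℝ) * (1/2) = 1 by norm_num, one_pow] at this
    have e6 : 0 < (2:ℝ) ^ n * (t - s) := mul_pos hp (by linarith)
    have f1 : q < q' + 1 := by
      have : (q:ℝ) < q' + 1 := by linarith
      exact_mod_cast this
    have f2 : q' < q + 2 := by
      have : (q':ℝ) < q + 2 := by linarith
      exact_mod_cast this
    rcases (by omega : q' = q ∨ q' = q + 1) with h' | h'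
    · rw [h', sub_self, abs_zero]; positivity
    · have hlt : q < 2 ^ n := by
        have : (q':ℝ) ≤ 2 ^ n := by nlinarith
        have : q' ≤ 2 ^ n := by exact_mod_cast this
        omega
      have := h n q hlt
      rw [h']
      push_cast
      exact this
  have htri : |f t - f s| ≤ B * r ^ n + 2 * (B * r ^ n / (1 - r)) := by
    rw [abs_le] at *
    constructor <;> linarith [hmid.1, hmid.2, ks.1, ks.2, kt.1, kt.2]
  have hrn : r ^ n * r ≤ (t - s) ^ α := by
    rw [← pow_succ, hr, ← Real.rpow_natCast, ← Real.rpow_mul (by norm_num), mul_comm,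
      Real.rpow_mul (by norm_num), Real.rpow_natCast]
    exact Real.rpow_le_rpow (by positivity) hn1.le hα.le
  have h1r : 0 < 1 - r := by linarith
  refine htri.trans ?_
  have : B * r ^ n + 2 * (B * r ^ n / (1 - r)) = (1 + 2 / (1 - r)) / r * B * (r ^ n * r) := by
    field_simp
  rw [this]
  gcongr

/-- let `σ` be a process on `[0,1]` with continuous nonnegative paths.
If there are `ε > 0` and `γ₀ > 0` with
`sup_{s ≠ t} E[exp(ε |σ_t² − σ_s²| / |t−s|^{γ₀})] < ∞`, then for every
`γ ∈ [0, γ₀/2)` the pathwise `γ`-Hölder seminorm of `σ` admits all exponential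
moments.  (Expressed in `ℝ≥0∞` via the supremum over all pairs `s < t`.) -/
theorem stmt9 {Ω : Type*} [MeasurableSpace Ω] (P : Measure Ω) [IsProbabilityMeasure P]
    (σ : Ω → ℝ → ℝ) (hσmeas : Measurable (Function.uncurry σ))
    (hσcont : ∀ ω, ContinuousOn (σ ω) (Set.Icc 0 1))
    (hσnonneg : ∀ ω, ∀ t ∈ Set.Icc (0:ℝ) 1, 0 ≤ σ ω t)
    (ε γ₀ : ℝ) (hε : 0 < ε) (hγ₀ : 0 < γ₀)
    (hbound : ∃ C : ℝ≥0∞, C < ⊤ ∧ ∀ s ∈ Set.Icc (0:ℝ) 1, ∀ t ∈ Set.Icc (0:ℝ) 1, s ≠ t →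
      (∫⁻ ω, ENNReal.ofReal
        (Real.exp (ε * (|σ ω t ^ 2 - σ ω s ^ 2| / |t - s| ^ γ₀))) ∂P) ≤ C)
    (γ : ℝ) (hγ : γ ∈ Set.Ico (0:ℝ) (γ₀ / 2)) (k : ℝ) (hk : 0 < k) :
    (∫⁻ ω, (⨆ (s : ℝ) (t : ℝ) (_ : 0 ≤ s) (_ : s < t) (_ : t ≤ 1),
      ENNReal.ofReal (Real.exp (k * (|σ ω t - σ ω s| / (t - s) ^ γ)))) ∂P) < ⊤ := by
  obtain ⟨C, hC, hb⟩ := hbound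
  obtain ⟨hγ0, hγ1⟩ := hγ
  obtain ⟨α, hα1, hα2⟩ := exists_between hγ1
  have hα : 0 < α := by linarith
  set r : ℝ := (1 / 2 : ℝ) ^ α with hr
  have hr0 : 0 < r := by positivity
  have hr1 : r < 1 := Real.rpow_lt_one (by norm_num) (by norm_num) hα
  set q : ℝ := (1 / 2 : ℝ) ^ (γ₀ - 2 * α) with hq
  have hq0 : 0 < q := by positivity
  have hq1 : q < 1 := Real.rpow_lt_one (by norm_num) (by norm_num) (by linarith)
  have h1r : 0 < 1 - r := by linarith
  set c : ℝ := (1 + 2 / (1 - r)) / r with hc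
  have hc0 : 0 < c := by positivity
  set K : ℝ := k * c with hK
  have hK0 : 0 < K := by positivity
  obtain ⟨S, hS⟩ : ∃ S : ℝ, ∀ n : ℕ, (n : ℝ) * q ^ n ≤ S := by
    obtain ⟨S, hS⟩ := (tendsto_self_mul_const_pow_of_lt_one hq0.le hq1).bddAbove_range
    exact ⟨S, fun n => hS ⟨n, rfl⟩⟩
  set A : ℝ := K ^ 2 / (4 * ε) + S * Real.log 4 with hA
  set Z : ℕ → ℕ → Ω → ℝ := fun n j ω =>
    Real.exp (ε * (|σ ω (((j:ℝ) + 1) / 2 ^ n) ^ 2 - σ ω ((j:ℝ) / 2 ^ n) ^ 2| /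
      |((j:ℝ) + 1) / 2 ^ n - (j:ℝ) / 2 ^ n| ^ γ₀)) with hZ
  set M : Ω → ℝ≥0∞ := fun ω => ∑' n : ℕ, ∑ j ∈ Finset.range (2 ^ n),
    ENNReal.ofReal ((1 / 4) ^ n) * ENNReal.ofReal (Z n j ω) with hM
  have hσm : ∀ x : ℝ, Measurable (fun ω => σ ω x) := fun x =>
    hσmeas.comp (measurable_id.prodMk measurable_const)
  have hZm : ∀ n j, Measurable (fun ω => ENNReal.ofReal (Z n j ω)) := by
    intro n j
    have h1 := hσm (((j:ℝ) + 1) / 2 ^ n)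
    have h2 := hσm ((j:ℝ) / 2 ^ n)
    simp only [hZ]
    have h3 : Measurable (fun ω => |σ ω (((j:ℝ) + 1) / 2 ^ n) ^ 2 - σ ω ((j:ℝ) / 2 ^ n) ^ 2|) := by
      have := (h1.pow_const 2).sub (h2.pow_const 2)
      exact continuous_abs.measurable.comp this
    exact ((h3.div_const _).const_mul ε).exp.ennreal_ofReal
  have hMint : ∫⁻ ω, M ω ∂P < ⊤ := by
    rw [hM, lintegral_tsum]
    swap
    · intro n
      exact (Finset.measurable_fun_sum _ (fun j _ => (hZm n j).const_mul _)).aemeasurable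
    have hle : ∀ n : ℕ, ∫⁻ ω, ∑ j ∈ Finset.range (2 ^ n),
        ENNReal.ofReal ((1 / 4) ^ n) * ENNReal.ofReal (Z n j ω) ∂P ≤
        ENNReal.ofReal ((1 / 2) ^ n) * C := by
      intro n
      rw [lintegral_finsetSum _ (fun j _ => (hZm n j).const_mul _)]
      have : ∀ j ∈ Finset.range (2 ^ n),
          ∫⁻ ω, ENNReal.ofReal ((1 / 4) ^ n) * ENNReal.ofReal (Z n j ω) ∂P ≤
          ENNReal.ofReal ((1 / 4) ^ n) * C := by
        intro j hj
        rw [lintegral_const_mul _ (hZm n j)]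
        have hj' : (j:ℝ) + 1 ≤ 2 ^ n := by
          have := Finset.mem_range.1 hj
          exact_mod_cast this
        have hp : (0:ℝ) < 2 ^ n := by positivity
        refine mul_le_mul_right (hb _ ⟨by positivity, ?_⟩ _ ⟨by positivity, ?_⟩ ?_) _
        · rw [div_le_one hp]; linarith
        · rw [div_le_one hp]; linarith
        · apply ne_of_lt
          gcongr
          linarith
      refine (Finset.sum_le_sum this).trans ?_
      rw [Finset.sum_const, Finset.card_range, nsmul_eq_mul, ← mul_assoc]
      apply le_of_eq
      congr 1
      rw [← ENNReal.ofReal_natCast, ← ENNReal.ofReal_mul (by positivity)]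
      congr 1
      push_cast
      rw [← mul_pow]; norm_num
    refine (ENNReal.tsum_le_tsum hle).trans_lt ?_
    rw [ENNReal.tsum_mul_right]
    refine ENNReal.mul_lt_top ?_ hC
    rw [← ENNReal.ofReal_tsum_of_nonneg (fun n => by positivity) summable_geometric_two]
    exact ENNReal.ofReal_lt_top
  have hpt : ∀ ω, (⨆ (s : ℝ) (t : ℝ) (_ : 0 ≤ s) (_ : s < t) (_ : t ≤ 1),
      ENNReal.ofReal (Real.exp (k * (|σ ω t - σ ω s| / (t - s) ^ γ)))) ≤
      ENNReal.ofReal (Real.exp A) * M ω := by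
    intro ω
    by_cases hMt : M ω = ⊤
    · rw [hMt, ENNReal.mul_top (by simp [Real.exp_pos])]
      exact le_top
    set m := (M ω).toReal with hm
    have hterm : ∀ n j : ℕ, j < 2 ^ n → (1 / 4) ^ n * Z n j ω ≤ m := by
      intro n j hj
      have h1 : ENNReal.ofReal ((1 / 4) ^ n) * ENNReal.ofReal (Z n j ω) ≤ M ω := by
        refine le_trans ?_ (ENNReal.le_tsum n)
        exact Finset.single_le_sum
          (f := fun j => ENNReal.ofReal ((1 / 4) ^ n) * ENNReal.ofReal (Z n j ω))
          (fun _ _ => zero_le) (Finset.mem_range.2 hj)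
      rw [← ENNReal.ofReal_mul (by positivity)] at h1
      exact (ENNReal.ofReal_le_iff_le_toReal hMt).1 h1
    have hm1 : 1 ≤ m := by
      refine le_trans ?_ (hterm 0 0 (by norm_num))
      rw [pow_zero, one_mul]
      exact Real.one_le_exp (by positivity)
    have hm0 : 0 < m := by linarith
    have hlog : 0 ≤ Real.log m := Real.log_nonneg hm1
    have hinc : ∀ n j : ℕ, j < 2 ^ n →
        |σ ω (((j : ℝ) + 1) / 2 ^ n) - σ ω ((j : ℝ) / 2 ^ n)| ≤
          ((A + Real.log m) / K) * ((1 / 2 : ℝ) ^ α) ^ n := by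
      intro n j hj
      have hp : (0:ℝ) < 2 ^ n := by positivity
      have hj' : (j:ℝ) + 1 ≤ 2 ^ n := by exact_mod_cast hj
      have ha : 0 ≤ σ ω (((j : ℝ) + 1) / 2 ^ n) :=
        hσnonneg ω _ ⟨by positivity, by rw [div_le_one hp]; linarith⟩
      have hb' : 0 ≤ σ ω ((j : ℝ) / 2 ^ n) :=
        hσnonneg ω _ ⟨by positivity, by rw [div_le_one hp]; linarith⟩
      have ht := hterm n j hj
      have hZl : ε * (|σ ω (((j:ℝ) + 1) / 2 ^ n) ^ 2 - σ ω ((j:ℝ) / 2 ^ n) ^ 2| /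
          |((j:ℝ) + 1) / 2 ^ n - (j:ℝ) / 2 ^ n| ^ γ₀) ≤ Real.log m + n * Real.log 4 := by
        have h4 : Z n j ω ≤ m * 4 ^ n := by
          have h44 : (1 / 4 : ℝ) ^ n * 4 ^ n = 1 := by rw [← mul_pow]; norm_num
          have := mul_le_mul_of_nonneg_right ht (by positivity : (0:ℝ) ≤ 4 ^ n)
          calc Z n j ω = (1 / 4 : ℝ) ^ n * 4 ^ n * Z n j ω := by rw [h44, one_mul]
            _ = (1 / 4 : ℝ) ^ n * Z n j ω * 4 ^ n := by ring
            _ ≤ _ := this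
        have := (Real.le_log_iff_exp_le (by positivity)).2 h4
        rwa [Real.log_mul hm0.ne' (by positivity), Real.log_pow] at this
      have hgap : |((j:ℝ) + 1) / 2 ^ n - (j:ℝ) / 2 ^ n| ^ γ₀ = (r ^ n) ^ 2 * q ^ n := by
        have e1 : ((j:ℝ) + 1) / 2 ^ n - (j:ℝ) / 2 ^ n = (1 / 2) ^ n := by
          rw [div_pow, one_pow]; ring
        rw [e1, abs_of_pos (by positivity), ← pow_mul, mul_comm n 2, pow_mul, ← mul_pow,
          ← Real.rpow_natCast, ← Real.rpow_mul (by norm_num), mul_comm,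
          Real.rpow_mul (by norm_num), Real.rpow_natCast]
        congr 1
        rw [hr, hq, ← Real.rpow_natCast, ← Real.rpow_mul (by norm_num),
          ← Real.rpow_add (by norm_num)]
        congr 1
        push_cast; ring
      rw [hgap] at hZl
      set a := σ ω (((j : ℝ) + 1) / 2 ^ n)
      set b := σ ω ((j : ℝ) / 2 ^ n)
      have hsq : |a - b| ^ 2 ≤ |a ^ 2 - b ^ 2| := by
        have : a ^ 2 - b ^ 2 = (a - b) * (a + b) := by ring
        rw [this, abs_mul, sq]
        refine mul_le_mul_of_nonneg_left ?_ (abs_nonneg _)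
        rw [abs_of_nonneg (by linarith : 0 ≤ a + b), abs_le]
        constructor <;> linarith
      have hrn : 0 < r ^ n := by positivity
      have hqn : 0 < q ^ n := by positivity
      have hqn1 : q ^ n ≤ 1 := pow_le_one₀ hq0.le hq1.le
      rw [← hr, ← div_le_iff₀ hrn, le_div_iff₀ hK0]
      set u := |a - b| / r ^ n with hu
      have hu2 : ε * u ^ 2 ≤ (Real.log m + n * Real.log 4) * q ^ n := by
        rw [← div_le_iff₀ hqn]
        have e : ε * u ^ 2 / q ^ n = ε * (|a - b| ^ 2 / ((r ^ n) ^ 2 * q ^ n)) := by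
          rw [hu]; field_simp
        rw [e]
        refine le_trans ?_ hZl
        gcongr
      have hl4 : 0 ≤ Real.log 4 := Real.log_nonneg (by norm_num)
      have hu3 : ε * u ^ 2 ≤ Real.log m + S * Real.log 4 := by
        have h1 := mul_le_mul_of_nonneg_right (hS n) hl4
        have h2 := mul_le_mul_of_nonneg_left hqn1 hlog
        nlinarith
      have hu4 : u * K ≤ ε * u ^ 2 + K ^ 2 / (4 * ε) := by
        have : ε * u ^ 2 + K ^ 2 / (4 * ε) - u * K = (2 * ε * u - K) ^ 2 / (4 * ε) := by
          field_simp; ring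
        have h2 : 0 ≤ (2 * ε * u - K) ^ 2 / (4 * ε) := by positivity
        linarith
      rw [hA]
      linarith
    refine iSup_le fun s => iSup_le fun t => iSup_le fun hs => iSup_le fun hst =>
      iSup_le fun ht => ?_
    have hh := holder_of_dyadic (σ ω) (hσcont ω) α hα _ hinc s t hs hst ht
    rw [← hr, ← hc] at hh
    have hts : 0 < t - s := by linarith
    have hB : 0 ≤ (A + Real.log m) / K := by
      have := (abs_nonneg _).trans (hinc 0 0 (by norm_num))
      simpa using this
    have hle : k * (|σ ω t - σ ω s| / (t - s) ^ γ) ≤ A + Real.log m := by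
      have h1 : |σ ω t - σ ω s| / (t - s) ^ γ ≤ c * ((A + Real.log m) / K) := by
        rw [div_le_iff₀ (by positivity)]
        refine hh.trans ?_
        have := Real.rpow_le_rpow_of_exponent_ge hts (by linarith) hα1.le
        gcongr
      refine (mul_le_mul_of_nonneg_left h1 hk.le).trans (le_of_eq ?_)
      rw [hK]; field_simp
    have : M ω = ENNReal.ofReal m := (ENNReal.ofReal_toReal hMt).symm
    rw [this, ← ENNReal.ofReal_mul (by positivity)]
    apply ENNReal.ofReal_le_ofReal
    refine (Real.exp_le_exp.2 hle).trans ?_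
    rw [Real.exp_add, Real.exp_log hm0]
  refine (lintegral_mono hpt).trans_lt ?_
  rw [lintegral_const_mul' _ _ ENNReal.ofReal_ne_top]
  exact ENNReal.mul_lt_top ENNReal.ofReal_lt_top hMint
end

section
/- Let α ∈ (1/2, 1), let Γ denote the Gamma function, and let K(t) = t^{α−1}/Γ(α) be the fractional kernel. Then for all 0 ≤ s < t ≤ 1: (i) ∫_s^t K(t−u)² du = (t−s)^{2α−1} / ( (2α−1) Γ(α)² ), and (ii) ∫_0^s ( K(t−u) − K(s−u) )² du ≤ (t−s)^{2α−1} / ( (2α−1) Γ(α)² ). -/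
/-- The `α`-fractional kernel `K(t) = t^{α−1}/Γ(α)`. -/
noncomputable def fracKernel (α t : ℝ) : ℝ := t ^ (α - 1) / Real.Gamma α

lemma fk_sq (α x : ℝ) (hx : 0 ≤ x) (h : α < 1) :
    fracKernel α x ^ 2 = x ^ (2 * α - 2) / Real.Gamma α ^ 2 := by
  unfold fracKernel
  rw [div_pow, ← Real.rpow_natCast, ← Real.rpow_mul hx]
  congr 2
  push_cast
  ring

lemma fk_int (α : ℝ) (h1 : 1 / 2 < α) (h : α < 1) (a b c : ℝ) (hab : a ≤ b) (hbc : b ≤ c) :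
    IntervalIntegrable (fun u => fracKernel α (c - u) ^ 2) MeasureTheory.volume a b ∧
    (∫ u in a..b, fracKernel α (c - u) ^ 2) =
      ((c - a) ^ (2 * α - 1) - (c - b) ^ (2 * α - 1)) / ((2 * α - 1) * Real.Gamma α ^ 2) := by
  have heq : Set.EqOn (fun u => (c - u) ^ (2 * α - 2) / Real.Gamma α ^ 2)
      (fun u => fracKernel α (c - u) ^ 2) (Set.uIcc a b) := by
    intro u hu
    rw [Set.uIcc_of_le hab] at hu
    exact (fk_sq α (c - u) (by linarith [hu.2]) h).symm
  constructor
  · have h0 : IntervalIntegrable (fun x : ℝ => x ^ (2 * α - 2)) MeasureTheory.volume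
        (c - a) (c - b) := intervalIntegral.intervalIntegrable_rpow' (by linarith)
    have h2 := (h0.comp_sub_left c).div_const (Real.Gamma α ^ 2)
    simp only [sub_sub_cancel] at h2
    exact h2.congr (fun u hu => heq (Set.uIoc_subset_uIcc hu))
  · rw [← intervalIntegral.integral_congr heq, intervalIntegral.integral_div,
      intervalIntegral.integral_comp_sub_left (fun x => x ^ (2 * α - 2)) c,
      integral_rpow (Or.inl (by linarith)), div_div]
    rw [show 2 * α - 2 + 1 = 2 * α - 1 by ring]

/-- for `α ∈ (1/2,1)` and `0 ≤ s < t ≤ 1`: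
(i) `∫_s^t K(t−u)² du = (t−s)^{2α−1}/((2α−1) Γ(α)²)`, and
(ii) `∫_0^s (K(t−u) − K(s−u))² du ≤ (t−s)^{2α−1}/((2α−1) Γ(α)²)`. -/
theorem stmt13 (α : ℝ) (hα : α ∈ Set.Ioo (1/2 : ℝ) 1)
    (s t : ℝ) (hs : 0 ≤ s) (hst : s < t) (ht : t ≤ 1) :
    (∫ u in s..t, (fracKernel α (t - u)) ^ 2) =
      (t - s) ^ (2 * α - 1) / ((2 * α - 1) * Real.Gamma α ^ 2) ∧
    (∫ u in (0:ℝ)..s, (fracKernel α (t - u) - fracKernel α (s - u)) ^ 2) ≤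
      (t - s) ^ (2 * α - 1) / ((2 * α - 1) * Real.Gamma α ^ 2) := by
  obtain ⟨h1, h2⟩ := hα
  have hG : 0 < Real.Gamma α := Real.Gamma_pos_of_pos (by linarith)
  have hp : 0 < 2 * α - 1 := by linarith
  have hz : (0:ℝ) ^ (2 * α - 1) = 0 := Real.zero_rpow hp.ne'
  constructor
  · rw [(fk_int α h1 h2 s t t hst.le le_rfl).2, sub_self, hz, sub_zero]
  · by_cases hi : IntervalIntegrable
      (fun u => (fracKernel α (t - u) - fracKernel α (s - u)) ^ 2) MeasureTheory.volume 0 s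
    · obtain ⟨ia, ea⟩ := fk_int α h1 h2 0 s t hs hst.le
      obtain ⟨ib, eb⟩ := fk_int α h1 h2 0 s s hs le_rfl
      have hle := intervalIntegral.integral_mono_on_of_le_Ioo hs hi (ib.sub ia) (by
        intro u hu
        have hx : 0 < s - u := by linarith [hu.2]
        have ha : 0 ≤ fracKernel α (t - u) :=
          div_nonneg (Real.rpow_nonneg (by linarith) _) hG.le
        have hab : fracKernel α (t - u) ≤ fracKernel α (s - u) :=
          div_le_div_of_nonneg_right
            (Real.rpow_le_rpow_of_nonpos hx (by linarith) (by linarith)) hG.le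
        show _ ≤ fracKernel α (s - u) ^ 2 - fracKernel α (t - u) ^ 2
        nlinarith [mul_nonneg ha (sub_nonneg.2 hab)])
      refine hle.trans ?_
      rw [intervalIntegral.integral_sub ib ia, ea, eb, sub_self, hz, ← sub_div]
      refine div_le_div_of_nonneg_right ?_ (by positivity)
      have := Real.rpow_le_rpow hs hst.le hp.le
      simp only [sub_zero]
      linarith
    · rw [intervalIntegral.integral_undef hi]
      exact div_nonneg (Real.rpow_nonneg (by linarith) _) (by positivity)
end

section
/- Let a, k, η > 0 satisfy the Feller condition 2a ≥ η², and define F(t,u) = ( 1 − (η²/(2k)) (1 − e^{−kt}) u )^{-1}. Then there exist constants ε₀ > 0 and C > 0, depending only on a, k, η, such that the following holds: for every x ≥ 0, every t ∈ (0,1], every ε ∈ (0, ε₀], and every nonnegative random variable V whose moment generating function satisfies E[ e^{uV} ] = F(t,u)^{2a/η²} exp( u e^{−kt} F(t,u) x ) for all u < 2k η^{-2} (1 − e^{−k})^{-1}, one has E[ exp( ε |V − x| / √t ) ] ≤ C exp( C ε x ). -/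
open MeasureTheory
open scoped ENNReal

/-- The complex extension of the moment generating function. -/
noncomputable def cirG (c p b : ℝ) (z : ℂ) : ℂ :=
  Complex.exp (-p * Complex.log (1 - c * z)) * Complex.exp (b * z * (1 - c * z)⁻¹)

lemma cirG_ofReal (c p b u : ℝ) (h : c * u < 1) :
    cirG c p b (u : ℂ) =
      ((((1 - c * u)⁻¹ ^ p * Real.exp (b * u * (1 - c * u)⁻¹) : ℝ)) : ℂ) := by
  have h1 : 0 < 1 - c * u := by linarith
  rw [Real.inv_rpow h1.le, ← Real.rpow_neg h1.le, Real.rpow_def_of_pos h1]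
  unfold cirG
  push_cast
  rw [Complex.ofReal_log h1.le]
  push_cast
  ring_nf

lemma cirG_re_pos (c : ℝ) (hc : 0 < c) (z : ℂ) (hz : z ∈ Metric.ball (0:ℂ) (1 / c)) :
    0 < (1 - c * z).re := by
  rw [mem_ball_zero_iff, lt_div_iff₀ hc] at hz
  have := Complex.re_le_norm z
  simp
  nlinarith

lemma cirG_diff (c p b : ℝ) (hc : 0 < c) :
    DifferentiableOn ℂ (cirG c p b) (Metric.ball 0 (1 / c)) := by
  intro z hz
  have h := cirG_re_pos c hc z hz
  have h1 : (1 - c * z) ∈ Complex.slitPlane := Or.inl h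
  have h0 : (1 - c * z) ≠ 0 := Complex.slitPlane_ne_zero h1
  apply DifferentiableAt.differentiableWithinAt
  unfold cirG
  have hl : DifferentiableAt ℂ (fun z : ℂ => Complex.log (1 - c * z)) z :=
    DifferentiableAt.clog (by fun_prop) h1
  have hi : DifferentiableAt ℂ (fun z : ℂ => (1 - c * z)⁻¹) z :=
    DifferentiableAt.inv (by fun_prop) h0
  fun_prop

open Filter Topology ProbabilityTheory in
lemma cir_extend {Ω : Type} [MeasurableSpace Ω] (P : Measure Ω)
    (V : Ω → ℝ) (hVm : Measurable V) (hV : ∀ ω, 0 ≤ V ω)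
    (c p b u₀ : ℝ) (hc : 0 < c) (hu₀ : 0 < u₀) (hcu : c * u₀ ≤ 1)
    (h : ∀ u < u₀, ∫ ω, Real.exp (u * V ω) ∂P =
      (1 - c * u)⁻¹ ^ p * Real.exp (b * u * (1 - c * u)⁻¹))
    (u : ℝ) (hu : c * u < 1) (hu' : 0 ≤ u ∨ u < u₀) :
    ∫⁻ ω, ENNReal.ofReal (Real.exp (u * V ω)) ∂P =
      ENNReal.ofReal ((1 - c * u)⁻¹ ^ p * Real.exp (b * u * (1 - c * u)⁻¹)) := by
  have hlt : ∀ v < u₀, c * v < 1 := fun v hv =>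
    lt_of_lt_of_le (mul_lt_mul_of_pos_left hv hc) hcu
  have hint : ∀ v < u₀, Integrable (fun ω => Real.exp (v * V ω)) P := by
    intro v hv
    by_contra hn
    have h1 := h v hv
    rw [integral_undef hn] at h1
    have : 0 < 1 - c * v := by linarith [hlt v hv]
    have : 0 < (1 - c * v)⁻¹ ^ p * Real.exp (b * v * (1 - c * v)⁻¹) := by positivity
    linarith
  by_cases huu : u < u₀
  · rw [← h u huu, ofReal_integral_eq_lintegral_ofReal (hint u huu)
      (Eventually.of_forall fun ω => (Real.exp_pos _).le)]
  have hu0 : 0 ≤ u := hu'.resolve_right huu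
  have hmem : (0:ℝ) ∈ interior (integrableExpSet V P) :=
    interior_maximal (t := Set.Iio u₀) (fun v hv => hint v hv) isOpen_Iio hu₀
  have hmemC : (0:ℂ).re ∈ interior (integrableExpSet V P) := by simpa using hmem
  have hball : (0:ℝ) < 1 / c := by positivity
  have hGd := cirG_diff c p b hc
  have hGa : AnalyticAt ℂ (cirG c p b) 0 :=
    hGd.analyticAt (Metric.ball_mem_nhds _ hball)
  have hMa : AnalyticAt ℂ (complexMGF V P) 0 := analyticAt_complexMGF hmemC
  have heq : complexMGF V P =ᶠ[𝓝 0] cirG c p b := by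
    rw [EventuallyEq, ← hMa.frequently_eq_iff_eventually_eq hGa]
    have ht : Tendsto (fun r : ℝ => (r : ℂ)) (𝓝[≠] 0) (𝓝[≠] 0) := by
      apply tendsto_nhdsWithin_of_tendsto_nhds_of_eventually_within
      · have := Complex.continuous_ofReal.tendsto 0
        rw [Complex.ofReal_zero] at this
        exact this.mono_left nhdsWithin_le_nhds
      · filter_upwards [self_mem_nhdsWithin] with r hr
        simpa using hr
    refine ht.frequently (Eventually.frequently ?_)
    have : ∀ᶠ r : ℝ in 𝓝[≠] 0, r < u₀ :=
      nhdsWithin_le_nhds (Iio_mem_nhds hu₀)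
    filter_upwards [this] with r hr
    rw [complexMGF_ofReal, cirG_ofReal _ _ _ _ (hlt r hr), ← h r hr]
    rfl
  have hmom : ∀ n, iteratedDeriv n (cirG c p b) 0 = ((∫ ω, V ω ^ n ∂P : ℝ) : ℂ) := by
    intro n
    rw [← heq.iteratedDeriv_eq n, iteratedDeriv_complexMGF hmemC n, ← integral_complex_ofReal]
    simp
  have hub : (u : ℂ) ∈ Metric.ball (0:ℂ) (1 / c) := by
    rw [mem_ball_zero_iff, lt_div_iff₀ hc, Complex.norm_real, Real.norm_of_nonneg hu0]
    linarith
  have hs := Complex.hasSum_taylorSeries_on_ball hGd hub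
  have hs' : HasSum (fun n : ℕ => (n.factorial : ℝ)⁻¹ * u ^ n * ∫ ω, V ω ^ n ∂P)
      ((1 - c * u)⁻¹ ^ p * Real.exp (b * u * (1 - c * u)⁻¹)) := by
    rw [← Complex.hasSum_ofReal, ← cirG_ofReal _ _ _ _ hu]
    refine hs.congr_fun ?_ |> id
    intro n
    rw [hmom]
    simp
    ring
  have hnn : ∀ n : ℕ, 0 ≤ (n.factorial : ℝ)⁻¹ * u ^ n * ∫ ω, V ω ^ n ∂P := fun n =>
    mul_nonneg (by positivity) (integral_nonneg fun ω => pow_nonneg (hV ω) n)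
  rw [← hs'.tsum_eq, ENNReal.ofReal_tsum_of_nonneg hnn hs'.summable]
  have hexp : ∀ ω, ENNReal.ofReal (Real.exp (u * V ω)) =
      ∑' n : ℕ, ENNReal.ofReal ((n.factorial : ℝ)⁻¹ * u ^ n * V ω ^ n) := by
    intro ω
    have h1 := NormedSpace.expSeries_div_hasSum_exp (u * V ω)
    rw [← Real.exp_eq_exp_ℝ] at h1
    rw [← h1.tsum_eq, ENNReal.ofReal_tsum_of_nonneg _ h1.summable]
    · congr 1
      ext n
      congr 1
      rw [mul_pow, div_eq_inv_mul, mul_assoc]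
    · intro n
      have := mul_nonneg hu0 (hV ω)
      positivity
  simp_rw [hexp]
  rw [lintegral_tsum (fun n => by fun_prop)]
  congr 1
  ext n
  rw [← integral_const_mul, ofReal_integral_eq_lintegral_ofReal]
  · exact (integrable_pow_of_mem_interior_integrableExpSet hmem n).const_mul _
  · refine Eventually.of_forall fun ω => ?_
    have := hV ω
    simp only [Pi.zero_apply]
    positivity

set_option maxHeartbeats 1000000 in
/-- let `a, k, η > 0` satisfy the Feller condition `2a ≥ η²` and let
`F(t,u) = (1 − (η²/(2k))(1 − e^{−kt}) u)⁻¹`.  Then there are constants `ε₀ > 0` and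
`C > 0`, depending only on `a, k, η`, such that for every `x ≥ 0`, `t ∈ (0,1]`,
`ε ∈ (0,ε₀]`, and every nonnegative random variable `V` whose moment generating
function is that of the CIR process at time `t` started at `x`, one has
`E[exp(ε |V − x|/√t)] ≤ C exp(C ε x)`. -/
theorem stmt17 (a k η : ℝ) (ha : 0 < a) (hk : 0 < k) (hη : 0 < η)
    (hFeller : η ^ 2 ≤ 2 * a)
    (F : ℝ → ℝ → ℝ)
    (hF : ∀ t u, F t u = (1 - η ^ 2 / (2 * k) * (1 - Real.exp (-k * t)) * u)⁻¹) :
    ∃ ε₀ > (0:ℝ), ∃ C > (0:ℝ),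
      ∀ (Ω : Type) (_ : MeasurableSpace Ω) (P : Measure Ω), IsProbabilityMeasure P →
        ∀ (V : Ω → ℝ), Measurable V → (∀ ω, 0 ≤ V ω) →
        ∀ x, 0 ≤ x → ∀ t ∈ Set.Ioc (0:ℝ) 1,
        (∀ u : ℝ, u < 2 * k * (η ^ 2)⁻¹ * (1 - Real.exp (-k))⁻¹ →
          (∫ ω, Real.exp (u * V ω) ∂P) =
            (F t u) ^ (2 * a / η ^ 2) *
              Real.exp (u * Real.exp (-k * t) * F t u * x)) →
        ∀ ε ∈ Set.Ioc (0:ℝ) ε₀,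
          (∫⁻ ω, ENNReal.ofReal (Real.exp (ε * |V ω - x| / Real.sqrt t)) ∂P) ≤
            ENNReal.ofReal (C * Real.exp (C * ε * x)) := by
  set p := 2 * a / η ^ 2 with hp
  have hp0 : 0 < p := by positivity
  have h2p : (0:ℝ) < 2 ^ p := by positivity
  refine ⟨1 / η ^ 2, by positivity, 2 ^ p + 1 + k, by positivity, ?_⟩
  intro Ω _ P hP V hVm hV x hx t ht hmgf ε hε
  obtain ⟨ht0, ht1⟩ := ht
  obtain ⟨hε0, hε1⟩ := hε
  set e := Real.exp (-k * t) with he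
  have he0 : 0 < e := Real.exp_pos _
  have hkt : 0 < k * t := by positivity
  have he1 : e < 1 := by rw [he, Real.exp_lt_one_iff]; linarith
  have hekt : 1 - e ≤ k * t := by
    have := Real.add_one_le_exp (-k * t)
    rw [← he] at this; linarith
  set c := η ^ 2 / (2 * k) * (1 - e) with hc
  have hc0 : 0 < c := mul_pos (by positivity) (by linarith)
  have hct : c ≤ η ^ 2 * t / 2 := by
    calc c ≤ η ^ 2 / (2 * k) * (k * t) := by rw [hc]; gcongr
      _ = _ := by field_simp
  have hek1 : Real.exp (-k) < 1 := by rw [Real.exp_lt_one_iff]; linarith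
  have hek2 : Real.exp (-k) ≤ e := by rw [he]; apply Real.exp_le_exp.2; nlinarith
  have hd : 0 < 1 - Real.exp (-k) := by linarith
  set u₀ := 2 * k * (η ^ 2)⁻¹ * (1 - Real.exp (-k))⁻¹ with hu₀
  have hu₀0 : 0 < u₀ := by positivity
  have hcu₀ : c * u₀ ≤ 1 := by
    have : c * u₀ = (1 - e) / (1 - Real.exp (-k)) := by
      rw [hc, hu₀]; field_simp
    rw [this, div_le_one hd]; linarith
  have hext := cir_extend P V hVm hV c p (e * x) u₀ hc0 hu₀0 hcu₀ (by
    intro u hu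
    rw [hmgf u hu, hF]
    congr 2
    ring)
  have hst : 0 < Real.sqrt t := Real.sqrt_pos.2 ht0
  have hst2 : Real.sqrt t * Real.sqrt t = t := Real.mul_self_sqrt ht0.le
  have hst1 : Real.sqrt t ≤ 1 := by
    rw [← Real.sqrt_one]; exact Real.sqrt_le_sqrt ht1
  set s := Real.sqrt t with hs
  set u := ε / s with hu
  have hu0 : 0 < u := by positivity
  have hus : u * s = ε := by rw [hu]; field_simp
  have hεη : η ^ 2 * ε ≤ 1 := by
    rw [le_div_iff₀ (by positivity)] at hε1; linarith
  have hcu2 : c * u ^ 2 ≤ ε / 2 := by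
    calc c * u ^ 2 ≤ η ^ 2 * t / 2 * u ^ 2 := by gcongr
      _ = η ^ 2 * ε * ε / 2 := by rw [← hst2, ← hus]; ring
      _ ≤ 1 * ε / 2 := by gcongr
      _ = _ := by ring
  have hcu : c * u ≤ 1 / 2 := by
    calc c * u ≤ η ^ 2 * t / 2 * u := by gcongr
      _ = η ^ 2 * ε * s / 2 := by rw [← hst2, ← hus]; ring
      _ ≤ 1 * 1 / 2 := by gcongr
      _ = _ := by ring
  have hcu0 : 0 < c * u := by positivity
  have e1 := hext u (by linarith) (Or.inl hu0.le)
  have e2 := hext (-u) (by linarith) (Or.inr (by linarith))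
  -- pointwise bound
  have hpt : ∀ ω, ENNReal.ofReal (Real.exp (ε * |V ω - x| / s)) ≤
      ENNReal.ofReal (Real.exp (-(u * x))) * ENNReal.ofReal (Real.exp (u * V ω)) +
      ENNReal.ofReal (Real.exp (u * x)) * ENNReal.ofReal (Real.exp (-u * V ω)) := by
    intro ω
    rw [← ENNReal.ofReal_mul (Real.exp_pos _).le, ← ENNReal.ofReal_mul (Real.exp_pos _).le,
      ← ENNReal.ofReal_add (by positivity) (by positivity), ← Real.exp_add, ← Real.exp_add]
    apply ENNReal.ofReal_le_ofReal
    have h1 : ε * |V ω - x| / s = u * |V ω - x| := by rw [hu]; ring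
    rw [h1]
    rcases abs_cases (V ω - x) with ⟨h, _⟩ | ⟨h, _⟩
    · rw [h, show u * (V ω - x) = -(u * x) + u * V ω by ring]
      linarith [Real.exp_pos (u * x + -u * V ω)]
    · rw [h, show u * -(V ω - x) = u * x + -u * V ω by ring]
      linarith [Real.exp_pos (-(u * x) + u * V ω)]
  have hux : 0 ≤ ε * x := by positivity
  have b1 : Real.exp (-(u * x)) * ((1 - c * u)⁻¹ ^ p * Real.exp (e * x * u * (1 - c * u)⁻¹)) ≤
      2 ^ p * Real.exp ((2 ^ p + 1 + k) * ε * x) := by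
    have hpos : 0 < 1 - c * u := by linarith
    have hF2 : (1 - c * u)⁻¹ ≤ 2 := by
      rw [inv_le_comm₀ hpos (by norm_num)]; linarith
    have hF3 : (1 - c * u)⁻¹ ≤ 1 + 2 * (c * u) := by
      rw [inv_le_iff_one_le_mul₀ hpos]; nlinarith
    rw [mul_left_comm, ← Real.exp_add]
    gcongr
    have : e * x * u * (1 - c * u)⁻¹ ≤ 1 * x * u * (1 + 2 * (c * u)) := by gcongr
    have h3 : x * (c * u ^ 2) ≤ x * (ε / 2) := by gcongr
    have h4 : 0 ≤ (2 ^ p + k) * (ε * x) := by positivity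
    nlinarith
  have b2 : Real.exp (u * x) * ((1 - c * -u)⁻¹ ^ p * Real.exp (e * x * -u * (1 - c * -u)⁻¹)) ≤
      1 * Real.exp ((2 ^ p + 1 + k) * ε * x) := by
    have hpos : 0 < 1 - c * -u := by linarith
    have hF2 : (1 - c * -u)⁻¹ ≤ 1 := by
      apply inv_le_one_of_one_le₀; linarith
    have hF3 : 1 - c * u ≤ (1 - c * -u)⁻¹ := by
      rw [← one_div, le_div_iff₀ hpos]
      nlinarith [sq_nonneg (c * u)]
    rw [mul_left_comm, ← Real.exp_add]
    gcongr
    · exact Real.rpow_le_one (by positivity) hF2 hp0.le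
    have h1 : e * x * u * (1 - c * u) ≤ e * x * u * (1 - c * -u)⁻¹ := by gcongr
    have h3 : x * (c * u ^ 2) ≤ x * (ε / 2) := by gcongr
    have h4 : 0 ≤ 2 ^ p * (ε * x) := by positivity
    have h5 : (1 - e) * (u * x) ≤ k * t * (u * x) := by gcongr
    have h6 : k * t * (u * x) = k * s * (ε * x) := by rw [← hst2, ← hus]; ring
    have h7 : k * s * (ε * x) ≤ k * 1 * (ε * x) := by gcongr
    have h8 : e * (x * (c * u ^ 2)) ≤ 1 * (x * (c * u ^ 2)) := by gcongr
    nlinarith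
  calc _ ≤ ∫⁻ ω, (ENNReal.ofReal (Real.exp (-(u * x))) * ENNReal.ofReal (Real.exp (u * V ω)) +
      ENNReal.ofReal (Real.exp (u * x)) * ENNReal.ofReal (Real.exp (-u * V ω))) ∂P :=
        lintegral_mono hpt
    _ ≤ ENNReal.ofReal (2 ^ p * Real.exp ((2 ^ p + 1 + k) * ε * x)) +
        ENNReal.ofReal (1 * Real.exp ((2 ^ p + 1 + k) * ε * x)) := by
      rw [lintegral_add_left (by fun_prop), lintegral_const_mul _ (by fun_prop),
        lintegral_const_mul _ (by fun_prop), e1, e2,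
        ← ENNReal.ofReal_mul (Real.exp_pos _).le, ← ENNReal.ofReal_mul (Real.exp_pos _).le]
      exact add_le_add (ENNReal.ofReal_le_ofReal b1) (ENNReal.ofReal_le_ofReal b2)
    _ ≤ _ := by
      rw [← ENNReal.ofReal_add (by positivity) (by positivity), ← add_mul]
      apply ENNReal.ofReal_le_ofReal
      exact mul_le_mul_of_nonneg_right (by linarith) (Real.exp_pos _).le
end
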